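/- arXiv:1607.00921 — 2 statements merged into one kernel-verified Lean document; each statement's English description precedes it below -/
import Mathlib

section
/- Let R be an equicodimensional noetherian ring which is a finite module over its center Z(R) and is Z(R)-Macaulay. Then R is Krull homogeneous: every nonzero right or left ideal I of R satisfies Kdim(I) = Kdim(R). -/
/-- A two-sided ideal of a (possibly noncommutative) ring is prime. -/
def IsPrimeTS {R : Type*} [Ring R] (P : TwoSidedIdeal R) : Prop :=
  P ≠ ⊤ ∧ ∀ a b : R, (∀ r : R, a * r * b ∈ P) → a ∈ P ∨ b ∈ P

/-- Height of an element `P` in a poset with respect to a predicate (`prime`):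
the supremum of lengths of strictly increasing chains of elements satisfying the
predicate and ending at `P`. -/
noncomputable def primeChainHeight {α : Type*} [Preorder α] (isP : α → Prop) (P : α) : ℕ∞ :=
  sSup {n : ℕ∞ | ∃ m : ℕ, n = (m : ℕ∞) ∧ ∃ f : Fin (m + 1) → α,
    StrictMono f ∧ (∀ i, isP (f i)) ∧ f (Fin.last m) = P}

/-- Height (codimension) of a two-sided ideal: the supremum of lengths of chains of
prime two-sided ideals descending from it. -/
noncomputable def tsHeight {R : Type*} [Ring R] (P : TwoSidedIdeal R) : ℕ∞ :=
  primeChainHeight IsPrimeTS P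

/-- Height of an ideal of a commutative ring. -/
noncomputable def cHeight {C : Type*} [CommRing C] (p : Ideal C) : ℕ∞ :=
  primeChainHeight Ideal.IsPrime p

/-- Contraction `P ∩ C` of a two-sided ideal of `R` to the central subring `C`
(given via the algebra structure map, whose image is central). -/
def contractTS {C R : Type*} [CommRing C] [Ring R] [Algebra C R]
    (P : TwoSidedIdeal R) : Ideal C :=
  Ideal.comap (algebraMap C R) (TwoSidedIdeal.asIdeal P)

/-- A two-sided ideal is maximal. -/
def IsMaximalTS {R : Type*} [Ring R] (M : TwoSidedIdeal R) : Prop :=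
  M ≠ ⊤ ∧ ∀ J : TwoSidedIdeal R, M < J → J = ⊤

/-- Krull dimension of a (possibly noncommutative) ring: the supremum of the
heights of its prime two-sided ideals. -/
noncomputable def tsKdim (R : Type*) [Ring R] : ℕ∞ :=
  ⨆ P : {P : TwoSidedIdeal R // IsPrimeTS P}, tsHeight P.1

/-- Krull dimension of a commutative ring: the supremum of heights of primes. -/
noncomputable def cKdim (C : Type*) [CommRing C] : ℕ∞ :=
  ⨆ p : {p : Ideal C // p.IsPrime}, cHeight p.1

/-- The grade `G_C(I, M)`: the supremum of the lengths of `M`-regular sequences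
consisting of elements of the ideal `I`. -/
noncomputable def cGrade {C : Type*} [CommRing C] (I : Ideal C) (M : Type*)
    [AddCommGroup M] [Module C M] : ℕ∞ :=
  sSup {n : ℕ∞ | ∃ rs : List C, n = rs.length ∧ (∀ x ∈ rs, x ∈ I) ∧
    RingTheory.Sequence.IsRegular M rs}

/-- `M` is a maximal Cohen-Macaulay `C`-module: for every maximal ideal `m` of `C`,
the `m`-grade of `M` equals the height of `m` (that is, `Kdim (C_m)`). -/
def IsMaximalCohenMacaulay (C : Type*) [CommRing C] (M : Type*)
    [AddCommGroup M] [Module C M] : Prop :=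
  ∀ m : Ideal C, m.IsMaximal → cGrade m M = cHeight m

open Filter in
/-- `DevLE n a b` : the deviation (in the sense of Gabriel–Rentschler) of the
interval `[a, b]` in a poset is at most `n`. -/
def DevLE {α : Type*} [Preorder α] : ℕ → α → α → Prop
  | 0, a, b => ∀ f : ℕ → α, Antitone f → (∀ i, a ≤ f i) → f 0 ≤ b →
      ∀ᶠ i in atTop, f (i + 1) = f i
  | n + 1, a, b => ∀ f : ℕ → α, Antitone f → (∀ i, a ≤ f i) → f 0 ≤ b →
      ∀ᶠ i in atTop, DevLE n (f (i + 1)) (f i)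

/-- The Krull dimension (Gabriel–Rentschler deviation of the submodule lattice)
of a module, valued in `ℕ∞`. -/
noncomputable def moduleKdim (R M : Type*) [Ring R] [AddCommGroup M] [Module R M] : ℕ∞ :=
  sInf {n : ℕ∞ | ∃ m : ℕ, n = m ∧ DevLE m (⊥ : Submodule R M) ⊤}


/-- Shifted deviation. -/
def DV {α : Type*} [Preorder α] : ℕ → α → α → Prop
  | 0, a, b => a = b
  | n + 1, a, b => ∀ f : ℕ → α, Antitone f → (∀ i, a ≤ f i) → f 0 ≤ b →
      ∀ᶠ i in Filter.atTop, DV n (f (i + 1)) (f i)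

theorem devLE_iff_DV {α : Type*} [Preorder α] (n : ℕ) : ∀ a b : α, DevLE n a b ↔ DV (n+1) a b := by
  induction n with
  | zero => intro a b; rfl
  | succ n ih =>
    intro a b
    rw [DevLE, DV]
    simp only [ih]

theorem DV_refl {α : Type*} [PartialOrder α] (n : ℕ) : ∀ a : α, DV n a a := by
  induction n with
  | zero => intro a; rfl
  | succ n ih =>
    intro a f hf ha hb
    have h : ∀ i, f i = a := fun i => le_antisymm ((hf (Nat.zero_le i)).trans hb) (ha i)
    simp only [h]
    exact Filter.Eventually.of_forall fun _ => ih a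

theorem DV_map {α β : Type*} [Preorder α] [Preorder β] (φ : α → β) (hφ : Monotone φ) (n : ℕ) :
    ∀ a b : α, a ≤ b → (∀ x y, a ≤ x → x ≤ y → y ≤ b → φ x = φ y → x = y) →
      DV n (φ a) (φ b) → DV n a b := by
  induction n with
  | zero => intro a b hab hinj h; exact hinj a b le_rfl hab le_rfl h
  | succ n ih =>
    intro a b hab hinj h f hf ha hb
    have := h (fun i => φ (f i)) (fun i j hij => hφ (hf hij)) (fun i => hφ (ha i)) (hφ hb)
    filter_upwards [this] with i hi
    refine ih _ _ (hf (Nat.le_succ i)) ?_ hi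
    intro x y hx hxy hy
    exact hinj x y ((ha _).trans hx) hxy (hy.trans ((hf (Nat.zero_le i)).trans hb))

theorem DV_trans {α : Type*} [Lattice α] [IsModularLattice α] (n : ℕ) :
    ∀ a b c : α, a ≤ b → b ≤ c → DV n a b → DV n b c → DV n a c := by
  induction n with
  | zero => intro a b c _ _ h1 h2; exact Eq.trans h1 h2
  | succ n ih =>
    intro a b c hab hbc h1 h2 f hf ha hc
    have e1 := h1 (fun i => f i ⊓ b) (fun i j hij => inf_le_inf_right b (hf hij))
      (fun i => le_inf (ha i) hab) inf_le_right
    have e2 := h2 (fun i => f i ⊔ b) (fun i j hij => sup_le_sup_right (hf hij) b)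
      (fun i => le_sup_right) (sup_le hc hbc)
    filter_upwards [e1, e2] with i h1 h2
    have hle : f (i+1) ≤ f i := hf (Nat.le_succ i)
    have hel : f (i+1) ⊔ (f i ⊓ b) ≤ f i := sup_le hle inf_le_left
    refine ih _ (f (i+1) ⊔ (f i ⊓ b)) _ le_sup_left hel ?_ ?_
    · refine DV_map (· ⊓ b) (fun x y h => inf_le_inf_right b h) n _ _ le_sup_left ?_ ?_
      · intro x y hx hxy hy h
        refine eq_of_le_of_inf_le_of_sup_le (z := b) hxy h.ge ?_
        refine sup_le (hy.trans (sup_le (hx.trans le_sup_left) (inf_le_right.trans le_sup_right))) le_sup_right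
      · have : (f (i+1) ⊔ (f i ⊓ b)) ⊓ b = f i ⊓ b :=
          le_antisymm (inf_le_inf_right b hel) (le_inf le_sup_right inf_le_right)
        change DV n (f (i+1) ⊓ b) ((f (i+1) ⊔ (f i ⊓ b)) ⊓ b)
        rw [this]; exact h1
    · refine DV_map (· ⊔ b) (fun x y h => sup_le_sup_right h b) n _ _ hel ?_ ?_
      · intro x y hx hxy hy h
        refine eq_of_le_of_inf_le_of_sup_le (z := b) hxy ?_ h.ge
        exact le_inf ((inf_le_inf_right b hy).trans (le_sup_right.trans hx)) inf_le_right
      · have : (f (i+1) ⊔ (f i ⊓ b)) ⊔ b = f (i+1) ⊔ b := by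
          rw [sup_assoc]; congr 1; exact sup_eq_right.2 inf_le_right
        change DV n ((f (i+1) ⊔ (f i ⊓ b)) ⊔ b) (f i ⊔ b)
        rw [this]; exact h2

/-- Upward chain of primes of length `k` starting at `q`. -/
def UpC {Z : Type*} [CommRing Z] : ℕ → Ideal Z → Prop
  | 0, q => q.IsPrime
  | k + 1, q => q.IsPrime ∧ ∃ q', q < q' ∧ UpC k q'

theorem UpC.isPrime {Z : Type*} [CommRing Z] {k : ℕ} {q : Ideal Z} (h : UpC k q) : q.IsPrime := by
  cases k with
  | zero => exact h
  | succ k => exact h.1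

/-- Determinant trick. -/
theorem det_trick {Z M : Type*} [CommRing Z] [AddCommGroup M] [Module Z M]
    (a b : Submodule Z M) (hb : b.FG) (𝔞 : Ideal Z) (t : Z)
    (h : ∀ x ∈ b, t • x ∈ a ⊔ 𝔞 • b) : ∃ k : ℕ, ∃ c ∈ 𝔞, ∀ x ∈ b, (t ^ k + c) • x ∈ a := by
  let N := b.map a.mkQ
  have : Module.Finite Z N := Module.Finite.iff_fg.2 (hb.map _)
  obtain ⟨p, hm, hd, hc, h0⟩ :=
    LinearMap.exists_monic_and_natDegree_eq_and_coeff_mem_pow_and_aeval_eq_zero (M := N) (R := Z)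
      (algebraMap Z (Module.End Z N) t) 𝔞 (by
        rintro _ ⟨⟨y, hy⟩, rfl⟩
        obtain ⟨x, hx, rfl⟩ := hy
        obtain ⟨u, hu, v, hv, huv⟩ := Submodule.mem_sup.1 (h x hx)
        have hv' : a.mkQ v ∈ 𝔞 • N := by
          have := Submodule.mem_map_of_mem (f := a.mkQ) hv
          rwa [Submodule.map_smul''] at this
        have : a.mkQ v = t • a.mkQ x := by
          rw [← map_smul, ← huv, map_add]
          simp [hu]
        have h2 : 𝔞 • N = (𝔞 • (⊤ : Submodule Z N)).map N.subtype := by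
          rw [Submodule.map_smul'', Submodule.map_top, Submodule.range_subtype]
        rw [h2, this] at hv'
        obtain ⟨w, hw, hw'⟩ := hv'
        have hww : algebraMap Z (Module.End Z N) t ⟨a.mkQ x, Submodule.mem_map_of_mem hx⟩ = w :=
          Subtype.ext hw'.symm
        rw [hww]; exact hw)
  refine ⟨p.natDegree, p.eval t - t ^ p.natDegree, ?_, ?_⟩
  · rw [Polynomial.eval_eq_sum_range, Finset.sum_range_succ, hm.coeff_natDegree, one_mul,
      add_sub_cancel_right]
    refine Ideal.sum_mem _ fun i hi => ?_
    refine Ideal.mul_mem_right _ _ ?_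
    exact Ideal.pow_le_self (by exact Nat.sub_ne_zero_of_lt (Finset.mem_range.1 hi)) (hc i)
  · intro x hx
    rw [add_sub_cancel]
    rw [Polynomial.aeval_algebraMap_apply] at h0
    have := congrArg (fun f => ((f ⟨a.mkQ x, Submodule.mem_map_of_mem hx⟩ : N) : M ⧸ a)) h0
    simpa [← Submodule.Quotient.mk_smul] using this

theorem DV_upper {Z M : Type*} [CommRing Z] [IsNoetherianRing Z] [AddCommGroup M] [Module Z M]
    [IsNoetherian Z M] (n : ℕ) : ∀ a b : Submodule Z M, a ≤ b →
      (∀ (q : Ideal Z) (k : ℕ), UpC k q → (∀ z : Z, (∀ x ∈ b, z • x ∈ a) → z ∈ q) → k < n) → DV n a b := by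
  induction n with
  | zero =>
    intro a b hab h
    refine le_antisymm hab ?_
    by_contra hba
    obtain ⟨I, hI⟩ : ∃ I : Ideal Z, ∀ z, z ∈ I ↔ (∀ x ∈ b, z • x ∈ a) :=
      ⟨a.colon b, fun z => Submodule.mem_colon⟩
    have : I ≠ ⊤ := by
      intro h
      refine hba fun x hx => ?_
      have := (hI 1).1 (h ▸ Submodule.mem_top) x hx
      simpa using this
    obtain ⟨m, hm, hIm⟩ := Ideal.exists_le_maximal I this
    exact absurd (h m 0 hm.isPrime fun z hz => hIm ((hI z).2 hz)) (by simp)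
  | succ n ih =>
    intro a
    induction a using WellFoundedGT.induction with
    | ind a iha =>
    intro b hab h
    by_cases hba : b ≤ a
    · rw [le_antisymm hba hab]; exact DV_refl _ _
    obtain ⟨x, hx, hxa⟩ := SetLike.not_le_iff_exists.1 hba
    -- associated prime
    obtain ⟨y, hyb, p, hp, hpy⟩ : ∃ y ∈ b, ∃ p : Ideal Z, p.IsPrime ∧ ∀ z, z ∈ p ↔ z • y ∈ a := by
      obtain ⟨P, hP, -⟩ := exists_le_isAssociatedPrime_of_isNoetherianRing (R := Z)
        (M := b.map a.mkQ) ⟨a.mkQ x, Submodule.mem_map_of_mem hx⟩ (by simpa using hxa)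
      obtain ⟨hP, ⟨_, y, hy, rfl⟩, rfl⟩ := isAssociatedPrime_iff.1 hP
      refine ⟨y, hy, _, hP, fun z => ?_⟩
      rw [Submodule.mem_colon_singleton, Submodule.mem_bot, Subtype.ext_iff]
      simp [← Submodule.Quotient.mk_smul]
    have hya : y ∉ a := fun hy => hp.ne_top ((Ideal.eq_top_iff_one _).2 ((hpy 1).2 (by simpa using hy)))
    have hlt : a < a ⊔ Z ∙ y := by
      refine lt_of_le_of_ne le_sup_left fun h => hya ?_
      rw [h]; exact Submodule.mem_sup_right (Submodule.mem_span_singleton_self y)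
    have hle : a ⊔ Z ∙ y ≤ b := sup_le hab (by simpa using hyb)
    refine DV_trans _ _ _ _ hlt.le hle ?_ ?_
    · intro f hf hfa hfb
      by_cases hall : ∃ i, f i = a
      · obtain ⟨i, hi⟩ := hall
        filter_upwards [Filter.eventually_ge_atTop i] with j hj
        have : ∀ j, i ≤ j → f j = a := fun j hj => le_antisymm ((hf hj).trans hi.le) (hfa j)
        rw [this j hj, this (j+1) (by omega)]
        exact DV_refl _ _
      · push Not at hall
        refine Filter.Eventually.of_forall fun i => ih _ _ (hf (Nat.le_succ i)) ?_
        intro q k hk hq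
        have : ¬ f (i+1) ≤ a := fun h => hall (i+1) (le_antisymm h (hfa _))
        obtain ⟨w, hw, hwa⟩ := SetLike.not_le_iff_exists.1 this
        have hw' := hfb (hf (Nat.zero_le (i+1)) hw)
        obtain ⟨u, hu, v, hv, rfl⟩ := Submodule.mem_sup.1 hw'
        obtain ⟨z, rfl⟩ := Submodule.mem_span_singleton.1 hv
        have hzy : z • y ∈ f (i+1) := by
          have := Submodule.sub_mem _ hw (hfa _ hu)
          simpa using this
        have hzp : z ∉ p := fun hz => hwa (Submodule.add_mem _ hu ((hpy z).1 hz))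
        have key : ∀ z', z' • y ∈ f (i+1) → z' ∈ q := by
          intro z' hz'
          refine hq z' fun x hx => ?_
          obtain ⟨u, hu, v, hv, rfl⟩ := Submodule.mem_sup.1 (hfb (hf (Nat.zero_le i) hx))
          obtain ⟨z2, rfl⟩ := Submodule.mem_span_singleton.1 hv
          rw [smul_add, smul_comm]
          exact Submodule.add_mem _ (hfa _ (Submodule.smul_mem _ _ hu)) (Submodule.smul_mem _ _ hz')
        have hpq : p < q := by
          refine lt_of_le_of_ne (fun z' hz' => key z' (hfa _ ((hpy z').1 hz'))) ?_
          rintro rfl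
          exact hzp (key z hzy)
        have := h p (k+1) ⟨hp, q, hpq, hk⟩ (fun z hz => (hpy z).2 (hz y hyb))
        omega
    · exact iha _ hlt b hle fun q k hk hq => h q k hk fun z hz => hq z fun x hx => hlt.le (hz x hx)

open Pointwise in
theorem DV_lower {Z A M : Type*} [CommRing Z] [Ring A] [Algebra Z A] [AddCommGroup M] [Module Z M]
    [Module A M] [IsScalarTower Z A M] [IsNoetherian Z M] (k : ℕ) : ∀ (q : Ideal Z) (n : ℕ)
    (a b : Submodule A M), a ≤ b → UpC k q → (∀ z : Z, (∀ x ∈ b, z • x ∈ a) → z ∈ q) →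
      DV n a b → k < n := by
  have base : ∀ (q : Ideal Z) (n : ℕ) (a b : Submodule A M), q.IsPrime →
      (∀ z : Z, (∀ x ∈ b, z • x ∈ a) → z ∈ q) → DV n a b → 0 < n := by
    intro q n a b hq h hd
    rcases n with _ | n
    · obtain rfl : a = b := hd
      exact absurd ((Ideal.eq_top_iff_one _).2 (h 1 fun x hx => by simpa using hx)) hq.ne_top
    · omega
  induction k with
  | zero => intro q n a b _ hk h hd; exact base q n a b hk h hd
  | succ k ih =>
    rintro q n a b hab ⟨hq, q', hqq', hk⟩ h hd
    have hn := base q n a b hq h hd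
    obtain ⟨n, rfl⟩ : ∃ m, n = m + 1 := ⟨n - 1, by omega⟩
    obtain ⟨s, hs', hs⟩ := SetLike.exists_of_lt hqq'
    have hq' := hk.isPrime
    have : SMulCommClass Z A M := IsScalarTower.to_smulCommClass
    have hmem : ∀ (i : ℕ) (x : M), x ∈ a ⊔ (s ^ i) • b ↔ ∃ u ∈ a, ∃ w ∈ b, u + s ^ i • w = x := by
      intro i x
      rw [Submodule.mem_sup]
      simp only [Submodule.mem_smul_pointwise_iff_exists]
      constructor
      · rintro ⟨u, hu, _, ⟨w, hw, rfl⟩, h⟩; exact ⟨u, hu, w, hw, h⟩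
      · rintro ⟨u, hu, w, hw, h⟩; exact ⟨u, hu, _, ⟨w, hw, rfl⟩, h⟩
    have hsm : ∀ (c : Submodule A M) (z : Z) (x : M), x ∈ c → z • x ∈ c := by
      intro c z x hx
      rw [← algebraMap_smul A z x]; exact c.smul_mem _ hx
    have hstep : ∀ i, a ⊔ (s ^ (i+1)) • b ≤ a ⊔ (s ^ i) • b := by
      intro i x hx
      obtain ⟨u, hu, w, hw, rfl⟩ := (hmem _ _).1 hx
      exact (hmem _ _).2 ⟨u, hu, s • w, hsm _ _ _ hw, by rw [pow_succ, mul_smul]⟩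
    have hev := hd (fun i => a ⊔ (s ^ i) • b) (antitone_nat_of_succ_le hstep)
      (fun i => le_sup_left) (by
        intro x hx
        obtain ⟨u, hu, w, hw, rfl⟩ := (hmem _ _).1 hx
        exact add_mem (hab hu) (hsm _ _ _ hw))
    obtain ⟨i, hi⟩ := hev.exists
    have := ih q' n _ _ (hstep i) hk (by
      intro t ht
      obtain ⟨k, c, hc, hkc⟩ := det_trick (a.restrictScalars Z) ((a ⊔ (s ^ i) • b).restrictScalars Z)
        (IsNoetherian.noetherian _) (Ideal.span {s}) t (by
          intro x hx
          obtain ⟨u, hu, w, hw, h⟩ := (hmem _ _).1 (ht x hx)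
          rw [← h]
          refine Submodule.add_mem_sup hu ?_
          rw [pow_succ', mul_smul]
          refine Submodule.smul_mem_smul (Ideal.mem_span_singleton_self s) ?_
          exact (hmem _ _).2 ⟨0, a.zero_mem, w, hw, zero_add _⟩)
      have h1 : (t ^ k + c) * s ^ i ∈ q := h _ fun x hx => by
        rw [mul_smul]
        exact hkc _ ((hmem _ _).2 ⟨0, a.zero_mem, x, hx, zero_add _⟩)
      have h2 : t ^ k + c ∈ q := (hq.mem_or_mem h1).resolve_right fun h => hs (hq.mem_of_pow_mem _ h)
      have h3 : c ∈ q' := (Ideal.span_le.2 (by simpa using hs')) hc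
      exact hq'.mem_of_pow_mem k ((Ideal.add_mem_iff_left _ h3).1 (hqq'.le h2))) hi
    omega

theorem noeth_of_ann_le {Z M M' : Type*} [CommRing Z] [AddCommGroup M] [Module Z M]
    [AddCommGroup M'] [Module Z M'] [Module.Finite Z M'] [IsNoetherian Z M]
    (h : ∀ z : Z, (∀ x : M, z • x = 0) → ∀ x : M', z • x = 0) : IsNoetherian Z M' := by
  obtain ⟨S, hS⟩ := (IsNoetherian.noetherian (⊤ : Submodule Z M))
  let φ : Z →ₗ[Z] (S → M) := LinearMap.pi fun x => LinearMap.toSpanSingleton Z M x.1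
  have hφ : ∀ z, φ z = 0 → ∀ x : M, z • x = 0 := by
    intro z hz x
    have hx : x ∈ Submodule.span Z (S : Set M) := hS ▸ Submodule.mem_top
    induction hx using Submodule.span_induction with
    | mem x hx => simpa [φ] using congrFun hz ⟨x, hx⟩
    | zero => simp
    | add x y _ _ hx hy => rw [smul_add, hx, hy, add_zero]
    | smul c x _ hx => rw [smul_comm, hx, smul_zero]
  have n1 : IsNoetherian Z (LinearMap.range φ) := inferInstance
  obtain ⟨T, hT⟩ := (Module.Finite.fg_top : (⊤ : Submodule Z M').FG)
  have n2 : ∀ y : M', IsNoetherian Z (Submodule.span Z {y}) := by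
    intro y
    have e := (LinearMap.quotKerEquivRange φ)
    rw [LinearMap.span_singleton_eq_range]
    have hk : LinearMap.ker φ ≤ LinearMap.ker (LinearMap.toSpanSingleton Z M' y) := by
      intro z hz
      have : φ z = 0 := by simpa using hz
      simpa using h z (hφ z this) y
    have : IsNoetherian Z (Z ⧸ LinearMap.ker φ) := isNoetherian_of_linearEquiv e.symm
    rw [← Submodule.range_liftQ _ _ hk]
    infer_instance
  have n3 : IsNoetherian Z (⨆ y : T, Submodule.span Z {y.1} : Submodule Z M') := by
    have := fun y : T => n2 y.1
    exact isNoetherian_iSup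
  have : (⨆ y : T, Submodule.span Z {y.1} : Submodule Z M') = ⊤ := by
    rw [← hT, ← Submodule.span_iUnion]; congr 1; ext; simp
  rw [this] at n3
  exact isNoetherian_top_iff.1 n3

theorem formanek {Z M : Type*} [CommRing Z] [AddCommGroup M] [Module Z M] [Module.Finite Z M]
    (hacc : WellFounded fun I J : Ideal Z => J • (⊤ : Submodule Z M) < I • (⊤ : Submodule Z M)) :
    IsNoetherian Z M := by
  by_contra hM
  let S : Set (Ideal Z) := {I | ¬ IsNoetherian Z (M ⧸ (I • (⊤ : Submodule Z M)))}
  have hS : S.Nonempty := by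
    refine ⟨⊥, fun h => hM ?_⟩
    have : IsNoetherian Z (M ⧸ (⊥ : Submodule Z M)) := by
      have e : ((⊥ : Ideal Z) • (⊤ : Submodule Z M)) = ⊥ := Submodule.bot_smul _
      rw [e] at h
      exact h
    exact isNoetherian_of_linearEquiv (Submodule.quotEquivOfEqBot (⊥ : Submodule Z M) rfl)
  obtain ⟨I, hI, hmax⟩ := hacc.has_min S hS
  obtain ⟨N0, hN0⟩ : ∃ N0 : Submodule Z M, N0 = I • (⊤ : Submodule Z M) := ⟨_, rfl⟩
  have hI : ¬ IsNoetherian Z (M ⧸ N0) := hN0 ▸ hI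
  have hq : ∀ z : Z, ¬ (∀ x : M, z • x ∈ N0) →
      ∃ N : Submodule Z M, IsNoetherian Z (M ⧸ N) ∧ N.map N0.mkQ =
        LinearMap.range (z • N0.mkQ) := by
    intro z hz
    refine ⟨(I ⊔ Ideal.span {z}) • ⊤, ?_, ?_⟩
    · by_contra hc
      refine hmax (I ⊔ Ideal.span {z}) hc ?_
      refine lt_of_le_of_ne (Submodule.smul_mono_left le_sup_left) fun he => hz fun x => ?_
      rw [hN0, he]
      exact Submodule.smul_mem_smul (Submodule.mem_sup_right (Ideal.mem_span_singleton_self z))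
        Submodule.mem_top
    · rw [Submodule.sup_smul, Submodule.map_sup, ← hN0, Submodule.mkQ_map_self, bot_sup_eq]
      ext y
      simp only [Submodule.ideal_span_singleton_smul, Submodule.mem_map,
        Submodule.mem_smul_pointwise_iff_exists, LinearMap.mem_range]
      constructor
      · rintro ⟨_, ⟨x, -, rfl⟩, rfl⟩; exact ⟨x, by simp⟩
      · rintro ⟨x, rfl⟩; exact ⟨_, ⟨x, trivial, rfl⟩, by simp⟩
  -- Zorn
  let F : Set (Submodule Z M) := {N | N0 ≤ N ∧ ∀ z : Z, (∀ x, z • x ∈ N) → ∀ x, z • x ∈ N0}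
  obtain ⟨N1, hN01, hN1⟩ := zorn_le_nonempty₀ F (by
    intro c hc hch N hN
    refine ⟨sSup c, ⟨(hc hN).1.trans (le_sSup hN), ?_⟩, fun z hz => le_sSup hz⟩
    intro z hz
    have hfg : (LinearMap.range (LinearMap.lsmul Z M z)).FG := by
      rw [LinearMap.range_eq_map]; exact Module.Finite.fg_top.map _
    have hle : LinearMap.range (LinearMap.lsmul Z M z) ≤ sSup c := by
      rintro _ ⟨x, rfl⟩; exact hz x
    obtain ⟨N', hN', hle'⟩ := (CompleteLattice.isCompactElement_iff_le_of_directed_sSup_le _ _).1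
      ((Submodule.fg_iff_compact _).1 hfg) c ⟨N, hN⟩ hch.directedOn hle
    exact (hc hN').2 z fun x => hle' ⟨x, rfl⟩) N0 ⟨le_rfl, fun z hz => hz⟩
  have hnoe : IsNoetherian Z (M ⧸ N1) := by
    constructor
    intro L
    by_cases hL : L = ⊥
    · rw [hL]; exact Submodule.fg_bot
    have hlt : ¬ (L.comap N1.mkQ ≤ N1) := by
      intro hle
      refine hL (eq_bot_iff.2 fun y hy => ?_)
      obtain ⟨x, rfl⟩ := N1.mkQ_surjective y
      have : x ∈ N1 := hle hy
      simpa using this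
    have hle1 : N1 ≤ L.comap N1.mkQ := by
      intro x hx
      have : N1.mkQ x = 0 := by simpa using hx
      simp only [Submodule.mem_comap, this, L.zero_mem]
    have : ¬ (L.comap N1.mkQ ∈ F) := fun h => hlt (hN1.2 h hle1)
    have : ∃ z : Z, (∀ x, z • x ∈ L.comap N1.mkQ) ∧ ¬ ∀ x, z • x ∈ N0 := by
      by_contra hc
      push Not at hc
      exact this ⟨hN01.trans hle1, fun z hz => hc z hz⟩
    obtain ⟨z, hz, hz0⟩ := this
    obtain ⟨N, hN, hNe⟩ := hq z hz0
    have hNle : ∀ x ∈ N, ∃ m : M, x - z • m ∈ N0 := by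
      intro x hx
      have := Submodule.mem_map_of_mem (f := N0.mkQ) hx
      rw [hNe] at this
      obtain ⟨m, hm⟩ := this
      refine ⟨m, ?_⟩
      rw [← Submodule.Quotient.mk_eq_zero, Submodule.Quotient.mk_sub, Submodule.Quotient.mk_smul]
      simpa [sub_eq_zero] using hm.symm
    let K : Submodule Z (M ⧸ N1) := LinearMap.range (z • N1.mkQ)
    have hKL : K ≤ L := by
      rintro _ ⟨m, rfl⟩
      have := hz m
      rwa [Submodule.mem_comap, map_smul] at this
    have hker : N ≤ LinearMap.ker (K.mkQ ∘ₗ N1.mkQ) := by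
      intro x hx
      obtain ⟨m, hm⟩ := hNle x hx
      rw [LinearMap.mem_ker, LinearMap.comp_apply, Submodule.mkQ_apply K,
        Submodule.Quotient.mk_eq_zero]
      refine ⟨m, ?_⟩
      have := (Submodule.Quotient.mk_eq_zero N1).2 (hN01 hm)
      rw [Submodule.Quotient.mk_sub, sub_eq_zero] at this
      rw [Submodule.mkQ_apply, this]
      simp
    have hnK : IsNoetherian Z ((M ⧸ N1) ⧸ K) := by
      refine isNoetherian_of_surjective (M := M ⧸ N) (N.liftQ _ hker) ?_
      rw [Submodule.range_liftQ]
      refine LinearMap.range_eq_top.2 ?_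
      rw [LinearMap.coe_comp]
      exact K.mkQ_surjective.comp N1.mkQ_surjective
    refine Submodule.fg_of_fg_map_of_fg_inf_ker K.mkQ (IsNoetherian.noetherian _) ?_
    rw [Submodule.ker_mkQ, inf_eq_right.2 hKL]
    change (LinearMap.range (z • N1.mkQ)).FG
    rw [LinearMap.range_eq_map]; exact Module.Finite.fg_top.map _
  have : IsNoetherian Z (M ⧸ N0) := by
    refine noeth_of_ann_le (M := M ⧸ N1) ?_
    intro z hz x
    obtain ⟨x, rfl⟩ := N0.mkQ_surjective x
    have := hN1.1.2 z (fun x => by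
      have := hz (N1.mkQ x)
      rwa [← map_smul, Submodule.mkQ_apply, Submodule.Quotient.mk_eq_zero] at this) x
    rwa [← map_smul, Submodule.mkQ_apply, Submodule.Quotient.mk_eq_zero]
  exact hI this

theorem center_noeth {Z R : Type*} [CommRing Z] [Ring R] [IsNoetherianRing R] [Algebra Z R]
    [Module.Finite Z R] : IsNoetherian Z R := by
  refine formanek (Z := Z) (M := R) ?_
  have hmem : ∀ I : Ideal Z, ∀ x : R, x ∈ I.map (algebraMap Z R) ↔ x ∈ I • (⊤ : Submodule Z R) := by
    intro I x
    constructor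
    · intro hx
      refine Submodule.span_induction (p := fun x _ => x ∈ I • (⊤ : Submodule Z R)) ?_ ?_ ?_ ?_ hx
      · rintro _ ⟨z, hz, rfl⟩
        rw [Algebra.algebraMap_eq_smul_one]
        exact Submodule.smul_mem_smul hz Submodule.mem_top
      · exact Submodule.zero_mem _
      · intro x y _ _ hx hy; exact Submodule.add_mem _ hx hy
      · intro r x _ hx
        refine Submodule.smul_induction_on hx ?_ ?_
        · intro z hz y _
          rw [smul_eq_mul, mul_smul_comm]
          exact Submodule.smul_mem_smul hz Submodule.mem_top
        · intro x y hx hy; rw [smul_add]; exact Submodule.add_mem _ hx hy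
    · intro hx
      refine Submodule.smul_induction_on hx ?_ ?_
      · intro z hz y _
        rw [Algebra.smul_def, Algebra.commutes]
        exact Ideal.mul_mem_left _ _ (Ideal.mem_map_of_mem _ hz)
      · intro x y hx hy; exact Ideal.add_mem _ hx hy
  have hle : ∀ I J : Ideal Z, I.map (algebraMap Z R) ≤ J.map (algebraMap Z R) ↔
      I • (⊤ : Submodule Z R) ≤ J • (⊤ : Submodule Z R) := by
    intro I J
    simp only [SetLike.le_def, hmem]
  have := InvImage.wf (fun I : Ideal Z => I.map (algebraMap Z R))
    (wellFounded_gt (α := Ideal R))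
  refine Subrelation.wf ?_ this
  intro I J h
  change J.map _ < I.map _
  rw [lt_iff_le_not_ge] at h ⊢
  rwa [hle, hle]

theorem depth_step {Z M : Type*} [CommRing Z] [IsNoetherianRing Z] [AddCommGroup M] [Module Z M]
    [IsNoetherian Z M] (p m : Ideal Z) (hp : p.IsPrime) (hm : m.IsPrime) (hpm : p ≤ m)
    (y0 : M) (hy0 : ∀ z, z ∈ p ↔ z • y0 = 0) (x : Z) (hxm : x ∈ m) (hx : IsSMulRegular M x) :
    ∃ q : Ideal Z, q.IsPrime ∧ p < q ∧ q ≤ m ∧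
      ∃ y : QuotSMulTop x M, ∀ z, z ∈ q ↔ z • y = 0 := by
  have hmk : ∀ y : M, (Submodule.Quotient.mk y : QuotSMulTop x M) = 0 ↔ ∃ w, x • w = y := by
    intro y
    rw [Submodule.Quotient.mk_eq_zero, Submodule.mem_smul_pointwise_iff_exists]
    simp
  -- step 1
  obtain ⟨N, hN⟩ : ∃ N : Submodule Z M, ∀ y, y ∈ N ↔ ∀ z ∈ p, z • y = 0 :=
    ⟨Submodule.torsionBySet Z M p, fun y => by simp [Submodule.mem_torsionBySet_iff]⟩
  have h1 : ∃ y ∈ N, ∀ t : Z, (∃ w, x • w = t • y) → t ∈ m := by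
    by_contra hc
    push Not at hc
    obtain ⟨S, hS⟩ := IsNoetherian.noetherian N
    have hSN : ∀ y ∈ S, y ∈ N := fun y hy => hS ▸ Submodule.subset_span hy
    have : ∃ t : Z, t ∉ m ∧ ∀ y ∈ S, ∃ w, x • w = t • y := by
      clear hS
      classical
      induction S using Finset.induction_on with
      | empty => exact ⟨1, fun h => hm.ne_top ((Ideal.eq_top_iff_one _).2 h), by simp⟩
      | insert a S ha ih =>
        obtain ⟨t, ht, h⟩ := ih fun y hy => hSN y (Finset.mem_insert_of_mem hy)
        obtain ⟨t', ⟨w', hw'⟩, ht'⟩ := hc a (hSN a (Finset.mem_insert_self _ _))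
        refine ⟨t * t', fun hh => (hm.mem_or_mem hh).elim ht ht', ?_⟩
        intro y hy
        rcases Finset.mem_insert.1 hy with rfl | hy
        · exact ⟨t • w', by rw [smul_comm, hw', mul_smul]⟩
        · obtain ⟨w, hw⟩ := h y hy
          exact ⟨t' • w, by rw [smul_comm, hw, mul_comm, mul_smul]⟩
    obtain ⟨t, ht, hts⟩ := this
    have hall : ∀ y ∈ N, ∃ w, x • w = t • y := by
      intro y hy
      rw [← hS] at hy
      induction hy using Submodule.span_induction with
      | mem y hy => exact hts y hy
      | zero => exact ⟨0, by simp⟩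
      | add y y' _ _ h h' =>
        obtain ⟨w, hw⟩ := h; obtain ⟨w', hw'⟩ := h'
        exact ⟨w + w', by rw [smul_add, smul_add, hw, hw']⟩
      | smul c y _ h =>
        obtain ⟨w, hw⟩ := h
        exact ⟨c • w, by rw [smul_comm, hw, smul_comm]⟩
    obtain ⟨k, c, hc, hkc⟩ := det_trick (⊥ : Submodule Z M) N (IsNoetherian.noetherian _)
      (Ideal.span {x}) t (by
        intro y hy
        obtain ⟨w, hw⟩ := hall y hy
        rw [bot_sup_eq, ← hw]
        refine Submodule.smul_mem_smul (Ideal.mem_span_singleton_self x) ((hN w).2 fun z hz => ?_)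
        refine hx ?_
        change x • z • w = x • 0
        rw [smul_comm, hw, smul_comm, (hN y).1 hy z hz]; simp)
    have h2 := hkc y0 ((hN y0).2 fun z hz => (hy0 z).1 hz)
    rw [Submodule.mem_bot, ← hy0] at h2
    have h3 : c ∈ m := (Ideal.span_le.2 (by simpa using hxm)) hc
    exact ht (hm.mem_of_pow_mem k ((Ideal.add_mem_iff_left _ h3).1 (hpm h2)))
  obtain ⟨y, hyN, hy⟩ := h1
  let ybar : QuotSMulTop x M := Submodule.Quotient.mk y
  have hann : ∀ u : QuotSMulTop x M, ∃ I : Ideal Z, ∀ z, z ∈ I ↔ z • u = 0 := fun u =>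
    ⟨LinearMap.ker (LinearMap.toSpanSingleton Z _ u), fun z => by simp⟩
  let S : Set (Ideal Z) := {I | I ≤ m ∧ ∃ c : Z, ∀ z, z ∈ I ↔ z • c • ybar = 0}
  have hS : S.Nonempty := by
    obtain ⟨I, hI⟩ := hann ybar
    refine ⟨I, fun z hz => ?_, 1, by simpa using hI⟩
    exact hy z ((hmk _).1 ((Submodule.Quotient.mk_smul _ _ _).trans ((hI z).1 hz)))
  obtain ⟨q, ⟨hqm, c, hqc⟩, hmax⟩ := WellFounded.has_min (wellFounded_gt (α := Ideal Z)) S hS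
  have hmax' : ∀ I ∈ S, q ≤ I → I = q := fun I hI hle => by
    by_contra hne; exact hmax I hI (lt_of_le_of_ne hle (Ne.symm hne))
  have hpq : p ≤ q := by
    intro z hz
    rw [hqc, smul_comm]
    have : z • ybar = 0 := by
      change z • (Submodule.Quotient.mk y : QuotSMulTop x M) = 0
      rw [← Submodule.Quotient.mk_smul, (hN y).1 hyN z hz, Submodule.Quotient.mk_zero]
    rw [this, smul_zero]
  have hxq : x ∈ q := by
    rw [hqc, smul_comm]
    have : x • ybar = 0 := by
      change x • (Submodule.Quotient.mk y : QuotSMulTop x M) = 0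
      rw [← Submodule.Quotient.mk_smul, hmk]
      exact ⟨y, rfl⟩
    rw [this, smul_zero]
  have hxp : x ∉ p := by
    intro h
    have h0 : y0 = 0 := hx (by change x • y0 = x • 0; rw [(hy0 x).1 h, smul_zero])
    exact hp.ne_top ((Ideal.eq_top_iff_one _).2 ((hy0 1).2 (by simp [h0])))
  have hqprime : q.IsPrime := by
    refine ⟨fun h => hm.ne_top (top_le_iff.1 (h ▸ hqm)), ?_⟩
    intro a b hab
    by_contra hc'
    push Not at hc'
    obtain ⟨ha, hb⟩ := hc'
    obtain ⟨I, hI⟩ := hann ((b * c) • ybar)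
    by_cases hIm : I ≤ m
    · have := hmax' I ⟨hIm, b * c, hI⟩ (by
        intro z hz
        rw [hI, mul_smul, smul_comm, (hqc z).1 hz, smul_zero])
      refine ha ?_
      rw [← this, hI]
      have := (hqc _).1 hab
      rwa [mul_smul] at this ⊢
    · obtain ⟨t, ht, htm⟩ := SetLike.not_le_iff_exists.1 hIm
      obtain ⟨J, hJ⟩ := hann ((t * c) • ybar)
      have := hmax' J ⟨?_, t * c, hJ⟩ (by
        intro z hz
        rw [hJ, mul_smul, smul_comm, (hqc z).1 hz, smul_zero])
      · refine hb ?_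
        rw [← this, hJ]
        have := (hI _).1 ht
        rw [mul_smul] at this ⊢
        rwa [smul_comm]
      · intro u hu
        have : u * t ∈ q := by
          rw [hqc]
          have := (hJ _).1 hu
          rwa [mul_smul] at this ⊢
        exact (hm.mem_or_mem (hqm this)).resolve_right htm
  refine ⟨q, hqprime, lt_of_le_of_ne hpq (fun h => hxp (h ▸ hxq)), hqm, c • ybar, hqc⟩

theorem depth_chain {Z : Type*} [CommRing Z] [IsNoetherianRing Z] (m : Ideal Z) (hm : m.IsPrime)
    (rs : List Z) : ∀ (M : Type _) [AddCommGroup M] [Module Z M] [IsNoetherian Z M]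
    (p : Ideal Z) (_ : p.IsPrime) (_ : p ≤ m) (y0 : M) (_ : ∀ z, z ∈ p ↔ z • y0 = 0)
    (_ : ∀ x ∈ rs, x ∈ m) (_ : RingTheory.Sequence.IsWeaklyRegular M rs), UpC rs.length p := by
  induction rs with
  | nil => intro M _ _ _ p hp _ _ _ _ _; exact hp
  | cons x rs ih =>
    intro M _ _ _ p hp hpm y0 hy0 hrs hreg
    rw [RingTheory.Sequence.isWeaklyRegular_cons_iff] at hreg
    obtain ⟨q, hq, hpq, hqm, y, hy⟩ := depth_step p m hp hm hpm y0 hy0 x (hrs x (by simp)) hreg.1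
    exact ⟨hp, q, hpq, ih (QuotSMulTop x M) q hq hqm y hy (fun z hz => hrs z (by simp [hz])) hreg.2⟩

theorem prime_artinian_simple {B : Type*} [Ring B] [IsArtinianRing B]
    (hB : ∀ a b : B, (∀ r, a * r * b = 0) → a = 0 ∨ b = 0) (J : Ideal B) [J.IsTwoSided]
    (hJ : J ≠ ⊥) : J = ⊤ := by
  have hss : IsSemisimpleRing B := by
    rw [IsArtinianRing.isSemisimpleRing_iff_jacobson]
    obtain ⟨n, hn⟩ := IsSemiprimaryRing.isNilpotent (R := B)
    by_contra hne
    obtain ⟨x, hx, hx0⟩ := Submodule.exists_mem_ne_zero_of_ne_bot hne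
    have key : ∀ k : ℕ, ∃ y ∈ (Ring.jacobson B) ^ k, y ≠ 0 := by
      intro k
      induction k with
      | zero => exact ⟨1, by rw [Submodule.pow_zero, Ideal.one_eq_top]; trivial, fun h => hx0 (by rw [← one_mul x, h, zero_mul])⟩
      | succ k ih =>
        obtain ⟨y, hy, hy0⟩ := ih
        have : ∃ r, y * r * x ≠ 0 := by
          by_contra hc
          push Not at hc
          rcases hB y x hc with h | h
          · exact hy0 h
          · exact hx0 h
        obtain ⟨r, hr⟩ := this
        refine ⟨_, ?_, hr⟩
        rw [Submodule.pow_succ, mul_assoc]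
        exact Ideal.mul_mem_mul hy (Ideal.mul_mem_left _ _ hx)
    obtain ⟨y, hy, hy0⟩ := key n
    rw [hn] at hy
    exact hy0 (by simpa using hy)
  obtain ⟨J', hJ'⟩ := exists_isCompl J
  obtain ⟨x, hx, hx0⟩ := Submodule.exists_mem_ne_zero_of_ne_bot hJ
  have : J' = ⊥ := by
    rw [eq_bot_iff]
    intro y hy
    refine (hB x y fun r => ?_).resolve_left hx0
    have h1 : x * r * y ∈ J := Ideal.mul_mem_right _ _ (Ideal.mul_mem_right _ _ hx)
    have h2 : x * r * y ∈ J' := Ideal.mul_mem_left _ _ hy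
    have := hJ'.disjoint.le_bot ⟨h1, h2⟩
    simpa using this
  have h := hJ'.sup_eq_top
  rwa [this, sup_bot_eq] at h

theorem prime_finite_meets {Z A : Type*} [CommRing Z] [IsDomain Z] [Ring A] [Algebra Z A]
    [Module.Finite Z A] (hinj : ∀ z : Z, algebraMap Z A z = 0 → z = 0)
    (hA : ∀ a b : A, (∀ r, a * r * b = 0) → a = 0 ∨ b = 0) (J : TwoSidedIdeal A)
    (hJ : ∃ x ∈ J, x ≠ 0) : ∃ z : Z, z ≠ 0 ∧ algebraMap Z A z ∈ J := by
  let S := nonZeroDivisors Z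
  let B := LocalizedModule S A
  have hreg : ∀ (z : Z) (a : A), z ≠ 0 → z • a = 0 → a = 0 := by
    intro z a hz h
    refine (hA (algebraMap Z A z) a fun r => ?_).resolve_left fun h => hz (hinj z h)
    rw [Algebra.commutes, mul_assoc, ← Algebra.smul_def, h, mul_zero]
  have hmk0 : ∀ (a : A) (s : S), (LocalizedModule.mk a s : B) = 0 ↔ a = 0 := by
    intro a s
    constructor
    · intro h
      rw [← LocalizedModule.zero_mk s, LocalizedModule.mk_eq] at h
      obtain ⟨u, hu⟩ := h
      simp only [smul_zero] at hu
      rw [Submonoid.smul_def, Submonoid.smul_def] at hu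
      exact hreg _ _ (nonZeroDivisors.ne_zero s.2) (hreg _ _ (nonZeroDivisors.ne_zero u.2) hu)
    · rintro rfl; exact LocalizedModule.zero_mk s
  have fin : Module.Finite (Localization S) B := inferInstance
  have art : IsArtinianRing (Localization S) :=
    inferInstanceAs (IsArtinianRing (FractionRing Z))
  have : IsScalarTower (Localization S) B B := ⟨fun x y z => by
    induction x using Localization.induction_on with
    | H x =>
    induction y using LocalizedModule.induction_on with
    | h a s =>
    induction z using LocalizedModule.induction_on with
    | h b t =>
    rw [LocalizedModule.mk_smul_mk, smul_eq_mul, smul_eq_mul, LocalizedModule.mk_mul_mk,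
      LocalizedModule.mk_mul_mk, LocalizedModule.mk_smul_mk, smul_mul_assoc, mul_assoc]⟩
  have : IsArtinianRing B := IsArtinianRing.of_finite (Localization S) B
  let JB : Ideal B :=
    { carrier := {x | ∃ a ∈ J, ∃ s : S, x = LocalizedModule.mk a s}
      zero_mem' := ⟨0, J.zero_mem, 1, (LocalizedModule.zero_mk 1).symm⟩
      add_mem' := by
        rintro _ _ ⟨a, ha, s, rfl⟩ ⟨b, hb, t, rfl⟩
        refine ⟨_, ?_, _, LocalizedModule.mk_add_mk⟩
        rw [Submonoid.smul_def, Submonoid.smul_def, Algebra.smul_def, Algebra.smul_def]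
        exact J.add_mem (J.mul_mem_left _ _ ha) (J.mul_mem_left _ _ hb)
      smul_mem' := by
        rintro c _ ⟨a, ha, s, rfl⟩
        induction c using LocalizedModule.induction_on with
        | h r t => exact ⟨_, J.mul_mem_left r a ha, _, LocalizedModule.mk_mul_mk⟩ }
  have : JB.IsTwoSided := ⟨by
    rintro _ c ⟨a, ha, s, rfl⟩
    induction c using LocalizedModule.induction_on with
    | h r t => exact ⟨_, J.mul_mem_right a r ha, _, LocalizedModule.mk_mul_mk⟩⟩
  have htop : JB = ⊤ := by
    refine prime_artinian_simple ?_ JB ?_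
    · intro a b
      induction a using LocalizedModule.induction_on with
      | h a s =>
      induction b using LocalizedModule.induction_on with
      | h b t =>
      intro h
      rw [hmk0, hmk0]
      refine hA a b fun r => ?_
      have := h (LocalizedModule.mk r 1)
      rwa [LocalizedModule.mk_mul_mk, LocalizedModule.mk_mul_mk, hmk0] at this
    · intro h
      obtain ⟨x, hx, hx0⟩ := hJ
      have : (LocalizedModule.mk x 1 : B) ∈ JB := ⟨x, hx, 1, rfl⟩
      rw [h, Submodule.mem_bot, hmk0] at this
      exact hx0 this
  have h1 : (1 : B) ∈ JB := htop ▸ Submodule.mem_top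
  obtain ⟨a, ha, s, h⟩ := h1
  have e1 : (1 : B) = LocalizedModule.mk 1 1 := OreLocalization.one_def
  rw [e1, LocalizedModule.mk_eq] at h
  obtain ⟨u, hu⟩ := h
  simp only [Submonoid.smul_def, one_smul, OneMemClass.coe_one] at hu
  refine ⟨(u : Z) * s, mul_ne_zero (nonZeroDivisors.ne_zero u.2) (nonZeroDivisors.ne_zero s.2), ?_⟩
  rw [Algebra.algebraMap_eq_smul_one, mul_smul, hu, Algebra.smul_def]
  exact J.mul_mem_left _ _ ha

theorem mem_contractTS {C R : Type*} [CommRing C] [Ring R] [Algebra C R]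
    (P : TwoSidedIdeal R) (z : C) : z ∈ (contractTS P : Ideal C) ↔ algebraMap C R z ∈ P := Iff.rfl

theorem contract_prime {C R : Type*} [CommRing C] [Ring R] [Algebra C R]
    (P : TwoSidedIdeal R) (hP : IsPrimeTS P) : (contractTS P : Ideal C).IsPrime := by
  refine ⟨fun h => hP.1 ?_, ?_⟩
  · have : algebraMap C R 1 ∈ P := (mem_contractTS P 1).1 (h ▸ Submodule.mem_top)
    rw [map_one] at this
    exact TwoSidedIdeal.ext fun x => ⟨fun _ => trivial, fun _ => by
      simpa using P.mul_mem_left x 1 this⟩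
  · intro x y hxy
    simp only [mem_contractTS] at *
    refine hP.2 _ _ fun r => ?_
    rw [Algebra.commutes, mul_assoc, ← map_mul]
    exact P.mul_mem_left _ _ hxy

theorem incomparable {C R : Type*} [CommRing C] [Ring R] [Algebra C R] [Module.Finite C R]
    (P Q : TwoSidedIdeal R) (hP : IsPrimeTS P) (hPQ : P < Q) :
    (contractTS P : Ideal C) < contractTS Q := by
  have hle : (contractTS P : Ideal C) ≤ contractTS Q := fun z hz => hPQ.le hz
  refine lt_of_le_of_ne hle fun he => ?_
  let A := P.ringCon.Quotient
  let p : Ideal C := contractTS P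
  have hp : p.IsPrime := contract_prime P hP
  let π : R →+* A := P.ringCon.mk'
  have hπ : Function.Surjective π := RingCon.mk'_surjective _
  have hπ0 : ∀ x, π x = 0 ↔ x ∈ P := by
    intro x
    rw [TwoSidedIdeal.mem_iff]
    exact RingCon.eq _
  let g : C ⧸ p →+* A := Ideal.Quotient.lift p (π.comp (algebraMap C R)) fun z hz => (hπ0 _).2 hz
  have hg : ∀ z : C, g (Ideal.Quotient.mk p z) = π (algebraMap C R z) := fun z => rfl
  letI : Algebra (C ⧸ p) A := g.toAlgebra' (by
    intro c x
    obtain ⟨c, rfl⟩ := Ideal.Quotient.mk_surjective c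
    obtain ⟨x, rfl⟩ := hπ x
    rw [hg, ← map_mul, ← map_mul, Algebra.commutes])
  have hsm : ∀ (z : C) (x : R), Ideal.Quotient.mk p z • π x = π (z • x) := by
    intro z x
    rw [Algebra.smul_def, Algebra.smul_def, map_mul]
    rfl
  have : Module.Finite (C ⧸ p) A := by
    obtain ⟨S, hS⟩ := (Module.Finite.fg_top : (⊤ : Submodule C R).FG)
    classical
    refine ⟨S.image π, ?_⟩
    rw [eq_top_iff]
    rintro x -
    obtain ⟨x, rfl⟩ := hπ x
    have hx : x ∈ Submodule.span C (S : Set R) := hS ▸ Submodule.mem_top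
    induction hx using Submodule.span_induction with
    | mem x hx => exact Submodule.subset_span (by simpa using ⟨x, hx, rfl⟩)
    | zero => rw [map_zero]; exact Submodule.zero_mem _
    | add x y _ _ hx hy => rw [map_add]; exact Submodule.add_mem _ hx hy
    | smul c x _ hx => rw [← hsm]; exact Submodule.smul_mem _ _ hx
  have hsur : ∀ x ∈ Q, ∀ y, π y = π x → y ∈ Q := by
    intro x hx y h
    have : y - x ∈ P := (hπ0 _).1 (by rw [map_sub, h, sub_self])
    have := Q.add_mem (hPQ.le this) hx
    simpa using this
  let J : TwoSidedIdeal A := TwoSidedIdeal.mk' (π '' Q)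
    ⟨0, Q.zero_mem, map_zero _⟩
    (by rintro _ _ ⟨x, hx, rfl⟩ ⟨y, hy, rfl⟩; exact ⟨_, Q.add_mem hx hy, map_add _ _ _⟩)
    (by rintro _ ⟨x, hx, rfl⟩; exact ⟨_, Q.neg_mem hx, map_neg _ _⟩)
    (by
      rintro r _ ⟨x, hx, rfl⟩
      obtain ⟨r, rfl⟩ := hπ r
      exact ⟨_, Q.mul_mem_left r x hx, map_mul _ _ _⟩)
    (by
      rintro _ r ⟨x, hx, rfl⟩
      obtain ⟨r, rfl⟩ := hπ r
      exact ⟨_, Q.mul_mem_right x r hx, map_mul _ _ _⟩)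
  have hJ : ∀ x, x ∈ J ↔ x ∈ π '' (Q : Set R) := fun x => TwoSidedIdeal.mem_mk' _ _ _ _ _ _ _
  obtain ⟨z, hz0, hz⟩ := prime_finite_meets (Z := C ⧸ p) (A := A) (by
      intro z hz
      obtain ⟨z, rfl⟩ := Ideal.Quotient.mk_surjective z
      have : π (algebraMap C R z) = 0 := hz
      rw [hπ0] at this
      exact Ideal.Quotient.eq_zero_iff_mem.2 this) (by
      intro a b h
      obtain ⟨a, rfl⟩ := hπ a
      obtain ⟨b, rfl⟩ := hπ b
      rw [hπ0, hπ0]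
      refine hP.2 a b fun r => ?_
      rw [← hπ0, map_mul, map_mul]
      exact h _) J (by
      obtain ⟨x, hxQ, hxP⟩ := SetLike.exists_of_lt hPQ
      exact ⟨π x, (hJ _).2 ⟨x, hxQ, rfl⟩, fun h => hxP ((hπ0 x).1 h)⟩)
  obtain ⟨z, rfl⟩ := Ideal.Quotient.mk_surjective z
  rw [hJ] at hz
  obtain ⟨x, hx, hxz⟩ := hz
  have h1 : algebraMap C R z ∈ Q := hsur x hx _ hxz.symm
  have h2 : z ∈ (contractTS Q : Ideal C) := h1
  rw [← he] at h2
  exact hz0 (Ideal.Quotient.eq_zero_iff_mem.2 h2)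

theorem going_up {C R : Type*} [CommRing C] [Ring R] [Algebra C R] [Module.Finite C R]
    [IsNoetherianRing R] (I : TwoSidedIdeal R) (q : Ideal C) (hq : q.IsPrime)
    (hI : (contractTS I : Ideal C) ≤ q) :
    ∃ P : TwoSidedIdeal R, I ≤ P ∧ IsPrimeTS P ∧ contractTS P = q := by
  let S : Set (TwoSidedIdeal R) := {P | I ≤ P ∧ (contractTS P : Ideal C) ≤ q}
  have wf : WellFounded (fun P Q : TwoSidedIdeal R => Q < P) := by
    have := InvImage.wf (fun I : TwoSidedIdeal R => I.asIdeal) (wellFounded_gt (α := Ideal R))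
    exact Subrelation.wf (fun {P Q} h => by exact h) this
  obtain ⟨P, ⟨hIP, hPq⟩, hmax⟩ := wf.has_min S ⟨I, le_rfl, hI⟩
  have hmax' : ∀ Q : TwoSidedIdeal R, P ≤ Q → ¬ Q ≤ P → ∃ z : C, algebraMap C R z ∈ Q ∧ z ∉ q := by
    intro Q hPQ hQP
    by_contra hc
    push Not at hc
    exact hmax Q ⟨hIP.trans hPQ, fun z hz => hc z hz⟩ (lt_of_le_not_ge hPQ hQP)
  have hprime : IsPrimeTS P := by
    constructor
    · intro h
      refine hq.ne_top ((Ideal.eq_top_iff_one _).2 (hPq ?_))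
      rw [mem_contractTS, h]; trivial
    · intro a b hab
      by_contra hc
      push Not at hc
      have ex : ∀ a, a ∉ P → ∃ z : C, algebraMap C R z ∈ P ⊔ TwoSidedIdeal.span {a} ∧ z ∉ q :=
        fun a ha => hmax' _ le_sup_left fun h => ha (h (le_sup_right (a := P)
          (TwoSidedIdeal.subset_span rfl)))
      obtain ⟨s, hs, hsq⟩ := ex a hc.1
      obtain ⟨t, ht, htq⟩ := ex b hc.2
      -- L1 : x with x r b in P for all r
      let L1 : TwoSidedIdeal R := TwoSidedIdeal.mk' {x | ∀ r, x * r * b ∈ P}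
        (by intro r; simp [P.zero_mem])
        (by intro x y hx hy r; rw [add_mul, add_mul]; exact P.add_mem (hx r) (hy r))
        (by intro x hx r; rw [neg_mul, neg_mul]; exact P.neg_mem (hx r))
        (by intro x y hy r; rw [mul_assoc x, mul_assoc x]; exact P.mul_mem_left _ _ (hy r))
        (by intro x y hx r; rw [mul_assoc x]; exact hx _)
      have hL1 : ∀ x, x ∈ L1 ↔ ∀ r, x * r * b ∈ P := fun x => TwoSidedIdeal.mem_mk' _ _ _ _ _ _ _
      have h1 : P ⊔ TwoSidedIdeal.span {a} ≤ L1 := by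
        refine sup_le (fun x hx => (hL1 x).2 fun r => P.mul_mem_right _ _ (P.mul_mem_right _ _ hx)) ?_
        rw [TwoSidedIdeal.span_le]
        rintro x rfl
        exact (hL1 _).2 hab
      have hsb := (hL1 _).1 (h1 hs)
      let L2 : TwoSidedIdeal R := TwoSidedIdeal.mk' {x | ∀ r, algebraMap C R s * r * x ∈ P}
        (by intro r; simp [P.zero_mem])
        (by intro x y hx hy r; rw [mul_add]; exact P.add_mem (hx r) (hy r))
        (by intro x hx r; rw [mul_neg]; exact P.neg_mem (hx r))
        (by intro x y hy r; rw [← mul_assoc, mul_assoc _ r]; exact hy _)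
        (by intro x y hx r; rw [← mul_assoc]; exact P.mul_mem_right _ _ (hx r))
      have hL2 : ∀ x, x ∈ L2 ↔ ∀ r, algebraMap C R s * r * x ∈ P :=
        fun x => TwoSidedIdeal.mem_mk' _ _ _ _ _ _ _
      have h2 : P ⊔ TwoSidedIdeal.span {b} ≤ L2 := by
        refine sup_le (fun x hx => (hL2 x).2 fun r => P.mul_mem_left _ _ hx) ?_
        rw [TwoSidedIdeal.span_le]
        rintro x rfl
        exact (hL2 _).2 hsb
      have := (hL2 _).1 (h2 ht) 1
      rw [mul_one, ← map_mul] at this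
      exact (hq.mem_or_mem (hPq this)).elim hsq htq
  refine ⟨P, hIP, hprime, le_antisymm hPq ?_⟩
  by_contra hnot
  let Pz : Submodule C R := P.asIdeal.restrictScalars C
  have hPz : ∀ x, x ∈ Pz ↔ x ∈ P := fun x => Iff.rfl
  have hmul : ∀ r x : R, x ∈ q • (⊤ : Submodule C R) →
      r * x ∈ q • (⊤ : Submodule C R) ∧ x * r ∈ q • (⊤ : Submodule C R) := by
    intro r x hx
    refine Submodule.smul_induction_on hx ?_ ?_
    · intro z hz y _
      rw [mul_smul_comm, smul_mul_assoc]
      exact ⟨Submodule.smul_mem_smul hz trivial, Submodule.smul_mem_smul hz trivial⟩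
    · intro x y hx hy
      rw [mul_add, add_mul]
      exact ⟨Submodule.add_mem _ hx.1 hy.1, Submodule.add_mem _ hx.2 hy.2⟩
  have hmul' : ∀ r x : R, x ∈ Pz ⊔ q • (⊤ : Submodule C R) →
      r * x ∈ Pz ⊔ q • (⊤ : Submodule C R) ∧ x * r ∈ Pz ⊔ q • (⊤ : Submodule C R) := by
    intro r x hx
    obtain ⟨u, hu, v, hv, rfl⟩ := Submodule.mem_sup.1 hx
    rw [mul_add, add_mul]
    exact ⟨Submodule.add_mem_sup (P.mul_mem_left _ _ hu) (hmul r v hv).1,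
      Submodule.add_mem_sup (P.mul_mem_right _ _ hu) (hmul r v hv).2⟩
  let L : TwoSidedIdeal R := TwoSidedIdeal.mk' (Pz ⊔ q • (⊤ : Submodule C R) : Submodule C R)
    (Submodule.zero_mem _) (fun hx hy => Submodule.add_mem _ hx hy)
    (fun hx => Submodule.neg_mem _ hx) (fun {x y} hy => (hmul' x y hy).1)
    (fun {x y} hx => (hmul' y x hx).2)
  have hL : ∀ x, x ∈ L ↔ x ∈ Pz ⊔ q • (⊤ : Submodule C R) :=
    fun x => TwoSidedIdeal.mem_mk' _ _ _ _ _ _ _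
  obtain ⟨z, hz, hzP⟩ := SetLike.not_le_iff_exists.1 hnot
  obtain ⟨t, ht, htq⟩ := hmax' L (fun x hx => (hL x).2 (Submodule.mem_sup_left hx)) (fun h => hzP
    (h ((hL _).2 (Submodule.mem_sup_right (by
      rw [Algebra.algebraMap_eq_smul_one]; exact Submodule.smul_mem_smul hz trivial)))))
  obtain ⟨k, c, hc, hkc⟩ := det_trick Pz (⊤ : Submodule C R) Module.Finite.fg_top q t (by
    intro x _
    rw [Algebra.smul_def t x]
    exact (hmul' x _ ((hL _).1 ht)).2)
  have h1 := hkc 1 trivial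
  rw [← Algebra.algebraMap_eq_smul_one] at h1
  exact htq (hq.mem_of_pow_mem k ((Ideal.add_mem_iff_left _ hc).1 (hPq h1)))


/-- There is a chain of length `j` ending at `P`. -/
def Ch {α : Type*} [Preorder α] (isP : α → Prop) (j : ℕ) (P : α) : Prop :=
  ∃ f : Fin (j + 1) → α, StrictMono f ∧ (∀ i, isP (f i)) ∧ f (Fin.last j) = P

theorem Ch.le_height {α : Type*} [Preorder α] {isP : α → Prop} {j : ℕ} {P : α} (h : Ch isP j P) :
    (j : ℕ∞) ≤ primeChainHeight isP P := le_sSup ⟨j, rfl, h⟩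

theorem Ch.isP {α : Type*} [Preorder α] {isP : α → Prop} {j : ℕ} {P : α} (h : Ch isP j P) :
    isP P := by
  obtain ⟨f, -, h, rfl⟩ := h
  exact h _

theorem Ch.zero {α : Type*} [Preorder α] {isP : α → Prop} {P : α} (h : isP P) : Ch isP 0 P :=
  ⟨fun _ => P, fun i j h => absurd h (by omega), fun _ => h, rfl⟩

theorem Ch.snoc {α : Type*} [Preorder α] {isP : α → Prop} {j : ℕ} {P Q : α} (h : Ch isP j P)
    (hPQ : P < Q) (hQ : isP Q) : Ch isP (j + 1) Q := by
  obtain ⟨f, hf, hp, rfl⟩ := h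
  refine ⟨Fin.snoc (α := fun _ => α) f Q, ?_, ?_, Fin.snoc_last _ _⟩
  · rw [Fin.strictMono_iff_lt_succ]
    intro i
    rw [Fin.snoc_castSucc]
    induction i using Fin.lastCases with
    | last => rw [Fin.succ_last, Fin.snoc_last]; exact hPQ
    | cast i =>
      rw [← Fin.castSucc_succ, Fin.snoc_castSucc]
      exact hf (Fin.castSucc_lt_succ)
  · intro i
    induction i using Fin.lastCases with
    | last => rw [Fin.snoc_last]; exact hQ
    | cast i => rw [Fin.snoc_castSucc]; exact hp i

theorem cHeight_lt_top {Z : Type*} [CommRing Z] [IsNoetherianRing Z] (m : Ideal Z)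
    (hm : m.IsPrime) : cHeight m ≠ ⊤ := by
  have hfin : m.height ≠ ⊤ := Ideal.height_ne_top hm.ne_top
  refine ne_top_of_le_ne_top hfin (sSup_le ?_)
  rintro _ ⟨k, rfl, f, hf, hp, hl⟩
  have e := PrimeSpectrum.height_eq_orderHeight (⟨m, hm⟩ : PrimeSpectrum Z)
  change m.height = _ at e
  rw [e]
  let s : LTSeries (PrimeSpectrum Z) := ⟨k, fun i => ⟨f i, hp i⟩, fun i => hf (Fin.castSucc_lt_succ)⟩
  exact Order.length_le_height (p := s) (x := ⟨m, hm⟩) (le_of_eq (PrimeSpectrum.ext hl))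

theorem tsHeight_le {C R : Type*} [CommRing C] [Ring R] [Algebra C R] [Module.Finite C R]
    (P : TwoSidedIdeal R) : tsHeight P ≤ cHeight (contractTS P : Ideal C) := by
  refine sSup_le ?_
  rintro _ ⟨k, rfl, f, hf, hp, rfl⟩
  exact le_sSup ⟨k, rfl, fun i => contractTS (f i), fun i j hij => incomparable _ _ (hp i) (hf hij),
    fun i => contract_prime _ (hp i), rfl⟩

theorem upC_ch {C R : Type*} [CommRing C] [Ring R] [Algebra C R] [Module.Finite C R]
    [IsNoetherianRing R] (k : ℕ) : ∀ (j : ℕ) (P : TwoSidedIdeal R), Ch IsPrimeTS j P →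
    UpC k (contractTS P : Ideal C) → ∃ Q : TwoSidedIdeal R, Ch IsPrimeTS (j + k) Q := by
  induction k with
  | zero => intro j P h _; exact ⟨P, h⟩
  | succ k ih =>
    rintro j P h ⟨_, q', hlt, hq'⟩
    obtain ⟨P', hle, hP', rfl⟩ := going_up P q' hq'.isPrime hlt.le
    have hlt' : P < P' := lt_of_le_of_ne hle fun e => by
      subst e; exact lt_irrefl _ hlt
    obtain ⟨Q, hQ⟩ := ih (j + 1) P' (h.snoc hlt' hP') hq'
    exact ⟨Q, by rwa [show j + (k + 1) = j + 1 + k by omega]⟩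

theorem upC_le {C R : Type*} [CommRing C] [Ring R] [Algebra C R] [Module.Finite C R]
    [IsNoetherianRing R] (hinj : ∀ z : C, algebraMap C R z = 0 → z = 0) (k : ℕ) (q : Ideal C)
    (h : UpC k q) : (k : ℕ∞) ≤ tsKdim R := by
  obtain ⟨P, -, hP, rfl⟩ := going_up (⊥ : TwoSidedIdeal R) q h.isPrime (by
    intro z hz
    rw [mem_contractTS, TwoSidedIdeal.mem_bot] at hz
    rw [hinj z hz]; exact q.zero_mem)
  obtain ⟨Q, hQ⟩ := upC_ch k 0 P (Ch.zero hP) h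
  rw [zero_add] at hQ
  exact hQ.le_height.trans (le_iSup (fun P : {P : TwoSidedIdeal R // IsPrimeTS P} => tsHeight P.1)
    ⟨Q, hQ.isP⟩)

theorem exists_maximal_over {C R : Type*} [CommRing C] [Ring R] [Algebra C R] [Module.Finite C R]
    [IsNoetherianRing R] (hinj : ∀ z : C, algebraMap C R z = 0 → z = 0) (m : Ideal C)
    (hm : m.IsMaximal) : ∃ M : TwoSidedIdeal R, IsMaximalTS M ∧ contractTS M = m := by
  obtain ⟨P, -, hP, hPm⟩ := going_up (⊥ : TwoSidedIdeal R) m hm.isPrime (by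
    intro z hz
    rw [mem_contractTS, TwoSidedIdeal.mem_bot] at hz
    rw [hinj z hz]; exact m.zero_mem)
  have wf : WellFounded (fun P Q : TwoSidedIdeal R => Q < P) := by
    have := InvImage.wf (fun I : TwoSidedIdeal R => I.asIdeal) (wellFounded_gt (α := Ideal R))
    exact Subrelation.wf (fun {P Q} h => by exact h) this
  obtain ⟨M, ⟨hPM, hM⟩, hmax⟩ := wf.has_min {Q | P ≤ Q ∧ Q ≠ ⊤} ⟨P, le_rfl, hP.1⟩
  refine ⟨M, ⟨hM, fun J hJ => ?_⟩, ?_⟩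
  · by_contra hJt
    exact hmax J ⟨hPM.trans hJ.le, hJt⟩ hJ
  · refine (hm.eq_of_le ?_ ?_).symm
    · intro h
      have : algebraMap C R 1 ∈ M := (mem_contractTS M 1).1 (h ▸ Submodule.mem_top)
      rw [map_one] at this
      exact hM (TwoSidedIdeal.ext fun x => ⟨fun _ => trivial, fun _ => by
        simpa using M.mul_mem_left x 1 this⟩)
    · rw [← hPm]; exact fun z hz => hPM hz

theorem kdim_eq {Z A M : Type*} [CommRing Z] [IsNoetherianRing Z] [Ring A] [Algebra Z A]
    [AddCommGroup M] [Module Z M] [Module A M] [IsScalarTower Z A M] [IsNoetherian Z M] (d : ℕ)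
    (hup : ∀ (q : Ideal Z) (k : ℕ), UpC k q → k ≤ d) (p : Ideal Z) (k : ℕ) (hk : d ≤ k)
    (hp : UpC k p) (y : M) (hy : ∀ z : Z, z • y = 0 → z ∈ p) : moduleKdim A M = d := by
  refine le_antisymm (sInf_le ⟨d, rfl, ?_⟩) (le_sInf ?_)
  · rw [devLE_iff_DV]
    refine DV_map (fun N : Submodule A M => N.restrictScalars Z) (fun a b h => h) _ _ _ bot_le ?_ ?_
    · intro x y _ _ _ h
      exact Submodule.restrictScalars_injective Z A M h
    · refine DV_upper _ _ _ (fun x _ => trivial) fun q k h _ => ?_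
      exact Nat.lt_succ_of_le (hup q k h)
  · rintro _ ⟨n, rfl, h⟩
    rw [devLE_iff_DV] at h
    have := DV_lower k p (n + 1) _ _ bot_le hp (fun z hz => hy z (by
      simpa using hz y trivial)) h
    exact_mod_cast (by omega : d ≤ n)

theorem main_aux {Z R A I : Type*} [CommRing Z] [IsNoetherianRing Z] [Ring R] [IsNoetherianRing R]
    [Algebra Z R] [Module.Finite Z R] [IsNoetherian Z R]
    (hinj : ∀ z : Z, algebraMap Z R z = 0 → z = 0)
    (hCM : IsMaximalCohenMacaulay Z R)
    (hequi : ∀ M : TwoSidedIdeal R, IsMaximalTS M → tsHeight M = tsKdim R)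
    [Ring A] [Algebra Z A] [AddCommGroup I] [Module Z I] [Module A I] [IsScalarTower Z A I]
    [IsNoetherian Z I] (φ : I →ₗ[Z] R) (hφ : Function.Injective φ) (x : I) (hx : x ≠ 0) :
    moduleKdim A I = tsKdim R := by
  obtain ⟨p, hpa, -⟩ := exists_le_isAssociatedPrime_of_isNoetherianRing Z x hx
  rw [isAssociatedPrime_iff] at hpa
  obtain ⟨hp, y, hy⟩ := hpa
  have hy' : ∀ z, z ∈ p ↔ z • y = 0 := by
    intro z
    rw [hy, Submodule.mem_colon_singleton, Submodule.mem_bot]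
  obtain ⟨m, hm, hpm⟩ := p.exists_le_maximal hp.ne_top
  obtain ⟨M, hM, hMm⟩ := exists_maximal_over (R := R) hinj m hm
  have h1 : tsKdim R ≤ cHeight m := by
    rw [← hequi M hM, ← hMm]; exact tsHeight_le M
  have hfin := cHeight_lt_top m hm.isPrime
  obtain ⟨d, hd⟩ := ENat.ne_top_iff_exists.1 (ne_top_of_le_ne_top hfin h1)
  have hgr : (d : ℕ∞) ≤ cGrade m R := by rw [hCM m hm, hd]; exact h1
  have hch : ∃ k, d ≤ k ∧ UpC k p := by
    rcases Nat.eq_zero_or_pos d with h0 | h0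
    · exact ⟨0, h0.le, hp⟩
    · have : ((d - 1 : ℕ) : ℕ∞) < cGrade m R :=
        lt_of_lt_of_le (by exact_mod_cast (by omega : d - 1 < d)) hgr
      obtain ⟨_, ⟨rs, rfl, hrs, hreg⟩, hlt⟩ := lt_sSup_iff.1 this
      have hlt' : d - 1 < rs.length := by exact_mod_cast hlt
      refine ⟨rs.length, by omega, depth_chain m hm.isPrime rs R p hp hpm (φ y) ?_ hrs
        hreg.toIsWeaklyRegular⟩
      intro z
      rw [hy', ← map_smul, map_eq_zero_iff φ hφ]
  obtain ⟨k, hk, hkp⟩ := hch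
  rw [← hd]
  refine kdim_eq (Z := Z) d ?_ p k hk hkp y fun z hz => (hy' z).2 hz
  intro q j hj
  have := upC_le (R := R) hinj j q hj
  rw [← hd] at this
  exact_mod_cast this

/-- Let `R` be an equicodimensional noetherian ring which is a finite module over its
centre `Z(R)` and is `Z(R)`-Macaulay.  Then `R` is Krull homogeneous: every nonzero
right or left ideal `I` of `R` satisfies `Kdim I = Kdim R`. -/
theorem krull_homogeneous_of_equicodimensional_macaulay (R : Type*) [Ring R]
    [IsNoetherianRing R] [Module.Finite (Subring.center R) R]
    (hCM : IsMaximalCohenMacaulay (Subring.center R) R)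
    (hequi : ∀ M : TwoSidedIdeal R, IsMaximalTS M → tsHeight M = tsKdim R) :
    (∀ I : Ideal R, I ≠ ⊥ → moduleKdim R I = moduleKdim R R) ∧
    (∀ I : Ideal Rᵐᵒᵖ, I ≠ ⊥ → moduleKdim Rᵐᵒᵖ I = moduleKdim Rᵐᵒᵖ Rᵐᵒᵖ) := by
  have hN : IsNoetherian (Subring.center R) R := center_noeth
  have hinj : ∀ z : Subring.center R, algebraMap (Subring.center R) R z = 0 → z = 0 :=
    fun z hz => Subtype.ext hz
  have hZ : IsNoetherianRing (Subring.center R) :=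
    noeth_of_ann_le (Z := Subring.center R) (M := R) (M' := Subring.center R) (by
      intro z hz x
      have h1 : z = 0 := hinj z (by rw [Algebra.algebraMap_eq_smul_one]; exact hz 1)
      rw [h1, zero_smul])
  let e : Rᵐᵒᵖ ≃ₗ[Subring.center R] R := (MulOpposite.opLinearEquiv (Subring.center R)).symm
  have hNo : IsNoetherian (Subring.center R) Rᵐᵒᵖ := isNoetherian_of_linearEquiv e.symm
  constructor
  · intro I hI
    obtain ⟨x, hx, hx0⟩ := Submodule.exists_mem_ne_zero_of_ne_bot hI
    have : IsNoetherian (Subring.center R) I :=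
      isNoetherian_of_injective (I.subtype.restrictScalars (Subring.center R))
        I.subtype_injective
    rw [main_aux (Z := Subring.center R) hinj hCM hequi
        (I.subtype.restrictScalars (Subring.center R)) I.subtype_injective ⟨x, hx⟩
        (fun h => hx0 (congrArg Subtype.val h)),
      main_aux (Z := Subring.center R) hinj hCM hequi
        (LinearMap.id : R →ₗ[Subring.center R] R) Function.injective_id x hx0]
  · intro I hI
    obtain ⟨x, hx, hx0⟩ := Submodule.exists_mem_ne_zero_of_ne_bot hI
    have : IsNoetherian (Subring.center R) I :=
      isNoetherian_of_injective (I.subtype.restrictScalars (Subring.center R))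
        I.subtype_injective
    rw [main_aux (Z := Subring.center R) hinj hCM hequi
        (e.toLinearMap ∘ₗ I.subtype.restrictScalars (Subring.center R))
        (e.injective.comp I.subtype_injective) ⟨x, hx⟩
        (fun h => hx0 (congrArg Subtype.val h)),
      main_aux (Z := Subring.center R) hinj hCM hequi
        e.toLinearMap e.injective x hx0]
end

section
/- Let R be an affine k-algebra which is a finite module over its center Z(R), k a field, and suppose R is Krull homogeneous. Then R is equicodimensional: every maximal ideal of R has height equal to Kdim(R). -/
namespace EQ
open Filter

theorem devLE_self {α : Type*} [PartialOrder α] (n : ℕ) (a : α) : DevLE n a a := by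
  have key : ∀ f : ℕ → α, Antitone f → (∀ i, a ≤ f i) → f 0 ≤ a → ∀ i, f i = a :=
    fun f hf h1 h2 i => le_antisymm ((hf (Nat.zero_le i)).trans h2) (h1 i)
  induction n with
  | zero =>
    intro f hf h1 h2
    exact Eventually.of_forall fun i => by rw [key f hf h1 h2, key f hf h1 h2]
  | succ n ih =>
    intro f hf h1 h2
    exact Eventually.of_forall fun i => by rw [key f hf h1 h2, key f hf h1 h2]; exact ih

theorem devLE_comap {α β : Type*} [PartialOrder α] [PartialOrder β] (φ : α → β) (hφ : Monotone φ)
    (n : ℕ) : ∀ (a b : α) (a' b' : β), a' ≤ φ a → φ b ≤ b' →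
    (∀ u v, a ≤ u → u ≤ v → v ≤ b → φ u = φ v → u = v) → DevLE n a' b' → DevLE n a b := by
  induction n with
  | zero =>
    intro a b a' b' ha hb hinj h f hf h1 h2
    have := h (fun i => φ (f i)) (hφ.comp_antitone hf) (fun i => ha.trans (hφ (h1 i)))
      ((hφ h2).trans hb)
    filter_upwards [this] with i hi
    exact hinj _ _ (h1 _) (hf (Nat.le_succ i)) ((hf (Nat.zero_le i)).trans h2) hi
  | succ n ih =>
    intro a b a' b' ha hb hinj h f hf h1 h2
    have := h (fun i => φ (f i)) (hφ.comp_antitone hf) (fun i => ha.trans (hφ (h1 i)))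
      ((hφ h2).trans hb)
    filter_upwards [this] with i hi
    exact ih _ _ _ _ le_rfl le_rfl (fun u v hu huv hv => hinj u v ((h1 _).trans hu) huv
      (hv.trans ((hf (Nat.zero_le i)).trans h2))) hi

theorem devLE_mono {α : Type*} [PartialOrder α] {n : ℕ} {a b a' b' : α} (ha : a' ≤ a)
    (hb : b ≤ b') (h : DevLE n a' b') : DevLE n a b :=
  devLE_comap id monotone_id n a b a' b' ha hb (fun _ _ _ _ _ h => h) h

theorem devLE_glue {α : Type*} [Lattice α] [IsModularLattice α] (c : α) (n : ℕ) :
    ∀ a b : α, DevLE n (a ⊓ c) (b ⊓ c) → DevLE n (a ⊔ c) (b ⊔ c) → DevLE n a b := by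
  induction n with
  | zero =>
    intro a b h h' f hf h1 h2
    have e1 := h (fun i => f i ⊓ c) (fun i j hij => inf_le_inf_right c (hf hij))
      (fun i => inf_le_inf_right c (h1 i)) (inf_le_inf_right c h2)
    have e2 := h' (fun i => f i ⊔ c) (fun i j hij => sup_le_sup_right (hf hij) c)
      (fun i => sup_le_sup_right (h1 i) c) (sup_le_sup_right h2 c)
    filter_upwards [e1, e2] with i hi hi'
    exact eq_of_le_of_inf_le_of_sup_le (hf (Nat.le_succ i)) hi.ge hi'.ge
  | succ n ih =>
    intro a b h h' f hf h1 h2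
    have e1 := h (fun i => f i ⊓ c) (fun i j hij => inf_le_inf_right c (hf hij))
      (fun i => inf_le_inf_right c (h1 i)) (inf_le_inf_right c h2)
    have e2 := h' (fun i => f i ⊔ c) (fun i j hij => sup_le_sup_right (hf hij) c)
      (fun i => sup_le_sup_right (h1 i) c) (sup_le_sup_right h2 c)
    filter_upwards [e1, e2] with i hi hi'
    exact ih _ _ hi hi'

theorem devLE_trans {α : Type*} [Lattice α] [IsModularLattice α] {n : ℕ} {a b c : α} (hab : a ≤ b)
    (hbc : b ≤ c) (h : DevLE n a b) (h' : DevLE n b c) : DevLE n a c := by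
  apply devLE_glue b
  · rwa [inf_eq_left.2 hab, inf_eq_right.2 hbc]
  · rwa [sup_eq_right.2 hab, sup_eq_left.2 hbc]

theorem devLE_module {A N : Type*} [CommRing A] [IsNoetherianRing A] [AddCommGroup N] [Module A N]
    [IsNoetherian A N] (n : ℕ) (I : Ideal A)
    (h : ∀ p : Ideal A, p.IsPrime → I ≤ p → DevLE n p ⊤) (x0 : Submodule A N)
    (hx0 : ∀ a ∈ I, ∀ m : N, a • m ∈ x0) : DevLE n x0 ⊤ := by
  obtain ⟨x, ⟨hx1, hx2⟩, hmax⟩ := WellFounded.has_min (wellFounded_gt (α := Submodule A N))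
    {x | x0 ≤ x ∧ DevLE n x0 x} ⟨x0, le_rfl, devLE_self n x0⟩
  by_cases hx : x = ⊤
  · rwa [hx] at hx2
  exfalso
  have : Nontrivial (N ⧸ x) := Submodule.Quotient.nontrivial_iff.2 hx
  obtain ⟨p, hp⟩ := associatedPrimes.nonempty A (N ⧸ x)
  obtain ⟨hp, m', hm'⟩ := isAssociatedPrime_iff.1 hp
  obtain ⟨m, rfl⟩ := Submodule.Quotient.mk_surjective x m'
  have hmem : ∀ a, a ∈ p ↔ a • m ∈ x := by
    intro a
    rw [hm', Submodule.mem_colon_singleton, Submodule.mem_bot, ← Submodule.Quotient.mk_smul,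
      Submodule.Quotient.mk_eq_zero]
  have hIp : I ≤ p := fun a ha => (hmem a).2 (hx1 (hx0 a ha m))
  have hmx : m ∉ x := fun hm => hp.ne_top ((Ideal.eq_top_iff_one _).2 ((hmem 1).2 (by simpa)))
  set y := x ⊔ Submodule.span A {m} with hy
  have hxy : x < y := by
    refine lt_of_le_of_ne le_sup_left fun e => hmx ?_
    rw [e]
    exact Submodule.mem_sup_right (Submodule.mem_span_singleton_self m)
  refine hmax y ⟨hx1.trans hxy.le, devLE_trans hx1 hxy.le hx2 ?_⟩ hxy
  refine devLE_comap (fun z : Submodule A N => Submodule.comap (LinearMap.toSpanSingleton A N m) z)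
    (fun z w hzw => Submodule.comap_mono hzw) n x y p ⊤ ?_ le_top ?_ (h p hp hIp)
  · intro a ha
    simpa using (hmem a).1 ha
  · intro u v hu huv hv e
    refine le_antisymm huv fun w hw => ?_
    obtain ⟨w1, hw1, w2, hw2, rfl⟩ := Submodule.mem_sup.1 (hv hw)
    obtain ⟨a, rfl⟩ := Submodule.mem_span_singleton.1 hw2
    have h1 : a • m ∈ v := by
      have := v.sub_mem hw (huv (hu hw1))
      simpa using this
    have h2 : a ∈ Submodule.comap (LinearMap.toSpanSingleton A N m) u := by
      have e' : Submodule.comap (LinearMap.toSpanSingleton A N m) u =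
        Submodule.comap (LinearMap.toSpanSingleton A N m) v := e
      rw [e']
      simpa using h1
    exact u.add_mem (hu hw1) (by simpa using h2)

theorem devLE_prime {A : Type*} [CommRing A] [IsNoetherianRing A] (n : ℕ) :
    ∀ p : PrimeSpectrum A, Order.coheight p ≤ n → DevLE n p.asIdeal ⊤ := by
  induction n with
  | zero =>
    intro p hp f hf h1 h2
    have hmax : IsMax p := by
      rw [← Order.coheight_eq_zero]; simpa using hp
    have hmax' : ∀ J : Ideal A, p.asIdeal < J → J = ⊤ := by
      intro J hJ
      by_contra hne
      obtain ⟨M, hM, hJM⟩ := Ideal.exists_le_maximal J hne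
      have : p < (⟨M, hM.isPrime⟩ : PrimeSpectrum A) := 
        (PrimeSpectrum.asIdeal_lt_asIdeal _ _).1 (lt_of_lt_of_le hJ hJM)
      exact hmax.not_lt this
    by_cases hh : ∃ i, f i = p.asIdeal
    · obtain ⟨i0, hi0⟩ := hh
      have : ∀ j ≥ i0, f j = p.asIdeal := fun j hj => le_antisymm (hi0 ▸ hf hj) (h1 j)
      filter_upwards [eventually_ge_atTop i0] with i hi
      rw [this i hi, this _ (hi.trans (Nat.le_succ i))]
    · push Not at hh
      have : ∀ i, f i = ⊤ := fun i => hmax' _ (lt_of_le_of_ne (h1 i) (hh i).symm)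
      exact Eventually.of_forall fun i => by rw [this, this]
  | succ n ih =>
    intro p hp f hf h1 h2
    by_cases hh : ∃ i, f i = p.asIdeal
    · obtain ⟨i0, hi0⟩ := hh
      have : ∀ j ≥ i0, f j = p.asIdeal := fun j hj => le_antisymm (hi0 ▸ hf hj) (h1 j)
      filter_upwards [eventually_ge_atTop i0] with i hi
      rw [this i hi, this _ (hi.trans (Nat.le_succ i))]
      exact devLE_self _ _
    · push Not at hh
      refine Eventually.of_forall fun i => ?_
      refine devLE_mono le_rfl le_top (devLE_module n (f (i+1)) ?_ (f (i+1)) ?_)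
      · intro q hq hle
        refine ih ⟨q, hq⟩ ?_
        have hlt : p < (⟨q, hq⟩ : PrimeSpectrum A) :=
          (PrimeSpectrum.asIdeal_lt_asIdeal _ _).1
            (lt_of_lt_of_le (lt_of_le_of_ne (h1 (i+1)) (hh (i+1)).symm) hle)
        have := (Order.coheight_add_one_le hlt).trans hp
        push_cast at this
        exact (ENat.add_le_add_iff_right (by simp)).1 this
      · intro a ha m
        exact Ideal.mul_mem_right _ _ ha

end EQ

namespace EQ
open TensorProduct

theorem artinian_prime {B : Type*} [Ring B] [IsArtinianRing B]
    (hB : ∀ a b : B, (∀ r, a * r * b = 0) → a = 0 ∨ b = 0) (I : Ideal B) (hI : I ≠ ⊥)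
    (hI2 : ∀ x ∈ I, ∀ r, x * r ∈ I) : I = ⊤ := by
  have hmul : ∀ J K : Ideal B, J * K = ⊥ → J = ⊥ ∨ K = ⊥ := by
    intro J K h
    by_contra hne
    push Not at hne
    obtain ⟨a, ha, ha0⟩ := Submodule.exists_mem_ne_zero_of_ne_bot hne.1
    obtain ⟨b, hb, hb0⟩ := Submodule.exists_mem_ne_zero_of_ne_bot hne.2
    rcases hB a b (fun r => by
      have : a * (r * b) ∈ J * K := Ideal.mul_mem_mul ha (K.mul_mem_left r hb)
      rw [h] at this
      rw [mul_assoc]; simpa using this) with h | h <;> contradiction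
  have hJ : Ring.jacobson B = ⊥ := by
    obtain ⟨n, hn⟩ := IsSemiprimaryRing.isNilpotent (R := B)
    by_contra hne
    have : ∀ n, Ring.jacobson B ^ n = 0 → Ring.jacobson B ^ 0 = 0 := by
      intro n
      induction n with
      | zero => exact id
      | succ n ih =>
        intro h
        rw [Submodule.pow_succ] at h
        exact ih ((hmul _ _ h).resolve_right hne)
    have h0 := this n hn
    rw [Submodule.pow_zero, Ideal.one_eq_top] at h0
    exact hI (le_bot_iff.1 (le_top.trans h0.le))
  have hss : IsSemisimpleRing B := IsArtinianRing.isSemisimpleRing_iff_jacobson.2 hJ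
  obtain ⟨I', hI'⟩ := exists_isCompl I
  have : I * I' = ⊥ := by
    rw [← le_bot_iff, ← hI'.inf_eq_bot]
    refine le_inf ?_ ?_
    · rw [Ideal.mul_le]
      exact fun r hr s _ => hI2 r hr s
    · rw [Ideal.mul_le]
      exact fun r _ s hs => I'.mul_mem_left r hs
  have h2 := (hmul _ _ this).resolve_left hI
  rw [h2] at hI'
  simpa using hI'.sup_eq_top

theorem inc_domain {D W : Type*} [CommRing D] [IsDomain D] [Ring W] [Algebra D W]
    [Module.Finite D W] (hinj : Function.Injective (algebraMap D W))
    (hW : ∀ a b : W, (∀ r, a * r * b = 0) → a = 0 ∨ b = 0) (I : TwoSidedIdeal W) (hI : I ≠ ⊥) :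
    ∃ s : D, s ≠ 0 ∧ algebraMap D W s ∈ I := by
  let K := FractionRing D
  let T := K ⊗[D] W
  let j : W →ₐ[D] T := Algebra.TensorProduct.includeRight
  have htf : ∀ (s : D) (w : W), s ≠ 0 → s • w = 0 → w = 0 := by
    intro s w hs h
    refine (hW (algebraMap D W s) w fun r => ?_).resolve_left fun h0 => hs (hinj (by simpa using h0))
    rw [mul_assoc, ← Algebra.smul_def, ← mul_smul_comm, h, mul_zero]
  have hloc : IsLocalizedModule (nonZeroDivisors D) (TensorProduct.mk D K W 1) := inferInstance
  have hjmk : ∀ w, TensorProduct.mk D K W 1 w = j w := fun w => rfl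
  have hsurj : ∀ t : T, ∃ s : D, s ≠ 0 ∧ ∃ w, s • t = j w := by
    intro t
    obtain ⟨⟨w, s⟩, h⟩ := hloc.surj t
    exact ⟨s, nonZeroDivisors.ne_zero s.2, w, h⟩
  have hjinj : ∀ w, j w = 0 → w = 0 := by
    intro w h
    have h' : TensorProduct.mk D K W 1 w = TensorProduct.mk D K W 1 0 := by
      rw [hjmk, h, map_zero]
    obtain ⟨c, hc⟩ := (IsLocalizedModule.eq_iff_exists (nonZeroDivisors D) _).1 h'
    rw [smul_zero] at hc
    exact htf c w (nonZeroDivisors.ne_zero c.2) hc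
  have hTtf : ∀ (s : D) (t : T), s ≠ 0 → s • t = 0 → t = 0 := by
    intro s t hs h
    have := IsLocalizedModule.smul_injective (TensorProduct.mk D K W 1)
      (⟨s, mem_nonZeroDivisors_of_ne_zero hs⟩ : nonZeroDivisors D)
    apply this
    simp only [smul_zero]
    exact h
  have hart : IsArtinianRing T := by
    have : IsArtinian K T := inferInstance
    exact isArtinian_of_tower K this
  have hTprime : ∀ a b : T, (∀ r, a * r * b = 0) → a = 0 ∨ b = 0 := by
    intro a b h
    obtain ⟨s, hs, w, hw⟩ := hsurj a
    obtain ⟨s', hs', w', hw'⟩ := hsurj b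
    rcases hW w w' (fun r => hjinj _ (by
      rw [map_mul, map_mul, ← hw, ← hw', smul_mul_assoc, smul_mul_assoc, mul_smul_comm, h,
        smul_zero, smul_zero])) with h0 | h0
    · left; apply hTtf s a hs; rw [hw, h0, map_zero]
    · right; apply hTtf s' b hs'; rw [hw', h0, map_zero]
  let I' : Ideal T :=
    { carrier := {t | ∃ s : D, s ≠ 0 ∧ ∃ w ∈ I, s • t = j w}
      zero_mem' := ⟨1, one_ne_zero, 0, I.zero_mem, by simp⟩
      add_mem' := by
        rintro a b ⟨s, hs, w, hw, h⟩ ⟨s', hs', w', hw', h'⟩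
        refine ⟨s * s', mul_ne_zero hs hs', s' • w + s • w', I.add_mem ?_ ?_, ?_⟩
        · rw [Algebra.smul_def]; exact I.mul_mem_left _ _ hw
        · rw [Algebra.smul_def]; exact I.mul_mem_left _ _ hw'
        · rw [smul_add, map_add, map_smul, map_smul, ← h, ← h', smul_smul, smul_smul, mul_comm s' s]
      smul_mem' := by
        rintro c a ⟨s, hs, w, hw, h⟩
        obtain ⟨s', hs', w', hw'⟩ := hsurj c
        refine ⟨s' * s, mul_ne_zero hs' hs, w' * w, I.mul_mem_left _ _ hw, ?_⟩
        rw [smul_eq_mul, map_mul, ← hw', ← h, smul_mul_assoc, mul_smul_comm, smul_smul] }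
  have hI' : I' = ⊤ := by
    apply artinian_prime hTprime
    · intro h0
      apply hI
      rw [← le_bot_iff]
      intro w hw
      have : j w ∈ I' := ⟨1, one_ne_zero, w, hw, by simp⟩
      rw [h0] at this
      rw [TwoSidedIdeal.mem_bot]
      exact hjinj w (by simpa using this)
    · rintro a ⟨s, hs, w, hw, h⟩ c
      obtain ⟨s', hs', w', hw'⟩ := hsurj c
      refine ⟨s * s', mul_ne_zero hs hs', w * w', I.mul_mem_right _ _ hw, ?_⟩
      rw [map_mul, ← hw', ← h, smul_mul_assoc, mul_smul_comm, smul_smul]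
  have h1 : (1 : T) ∈ I' := by rw [hI']; trivial
  obtain ⟨s, hs, w, hw, h⟩ := h1
  refine ⟨s, hs, ?_⟩
  have : algebraMap D W s = w := by
    rw [← sub_eq_zero]
    apply hjinj
    rw [map_sub, ← h, AlgHom.commutes, Algebra.algebraMap_eq_smul_one, sub_self]
  rwa [this]

theorem mem_contract {C R : Type*} [CommRing C] [Ring R] [Algebra C R] {P : TwoSidedIdeal R}
    {c : C} : c ∈ contractTS (C := C) P ↔ algebraMap C R c ∈ P := by
  rw [contractTS, Ideal.mem_comap, TwoSidedIdeal.mem_asIdeal]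

theorem one_notMem {R : Type*} [Ring R] {P : TwoSidedIdeal R} (hP : P ≠ ⊤) : (1 : R) ∉ P :=
  fun h => hP ((TwoSidedIdeal.one_mem_iff P).1 h)

theorem contract_prime {C R : Type*} [CommRing C] [Ring R] [Algebra C R] {P : TwoSidedIdeal R}
    (hP : IsPrimeTS P) : (contractTS (C := C) P).IsPrime := by
  refine ⟨fun h => ?_, fun {a b} hab => ?_⟩
  · have : (1 : C) ∈ contractTS (C := C) P := by rw [h]; trivial
    rw [mem_contract, map_one] at this
    exact one_notMem hP.1 this
  · rw [mem_contract] at *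
    rw [mem_contract]
    apply hP.2
    intro r
    rw [mul_assoc, ← Algebra.commutes b r, ← mul_assoc, ← map_mul]
    exact P.mul_mem_right _ _ hab

theorem mem_of_smul {C R : Type*} [CommRing C] [Ring R] [Algebra C R] {P : TwoSidedIdeal R}
    (hP : IsPrimeTS P) {c : C} (hc : algebraMap C R c ∉ P) {x : R}
    (h : algebraMap C R c * x ∈ P) : x ∈ P := by
  refine (hP.2 (algebraMap C R c) x fun r => ?_).resolve_left hc
  rw [Algebra.commutes c r, mul_assoc]
  exact P.mul_mem_left _ _ h

theorem exists_prime {R : Type*} [Ring R] [IsNoetherianRing R] (S : Set R) (hne : S.Nonempty)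
    (hS : ∀ x ∈ S, ∀ y ∈ S, ∃ r, x * r * y ∈ S) (I : TwoSidedIdeal R) (hI : ∀ x ∈ S, x ∉ I) :
    ∃ P, IsPrimeTS P ∧ I ≤ P ∧ ∀ x ∈ S, x ∉ P := by
  have hmono : StrictMono (fun J : TwoSidedIdeal R => J.asIdeal) := by
    apply Monotone.strictMono_of_injective
    · exact TwoSidedIdeal.asIdeal.monotone
    · intro J K h
      ext x
      have : x ∈ J.asIdeal ↔ x ∈ K.asIdeal := by
        have h' : J.asIdeal = K.asIdeal := h
        rw [h']
      simpa using this
  have : WellFoundedGT (TwoSidedIdeal R) := hmono.wellFoundedGT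
  obtain ⟨J, ⟨hJ1, hJ2⟩, hmax⟩ := WellFounded.has_min (wellFounded_gt (α := TwoSidedIdeal R))
    {J | I ≤ J ∧ ∀ x ∈ S, x ∉ J} ⟨I, le_rfl, hI⟩
  have key : ∀ L : TwoSidedIdeal R, J ≤ L → ∀ a ∈ L, a ∉ J → ∃ x ∈ S, x ∈ L := by
    intro L hL a haL haJ
    by_contra hcon
    push Not at hcon
    exact hmax L ⟨hJ1.trans hL, hcon⟩ (lt_of_le_of_ne hL fun e => haJ (e ▸ haL))
  refine ⟨J, ⟨?_, ?_⟩, hJ1, hJ2⟩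
  · rintro rfl
    obtain ⟨x, hx⟩ := hne
    exact hJ2 x hx trivial
  · intro a b hab
    by_contra hcon
    push Not at hcon
    let L : TwoSidedIdeal R := TwoSidedIdeal.mk' {x | ∀ r, x * r * b ∈ J}
      (fun r => by simp [J.zero_mem])
      (fun {x y} hx hy r => by rw [add_mul, add_mul]; exact J.add_mem (hx r) (hy r))
      (fun {x} hx r => by rw [neg_mul, neg_mul]; exact J.neg_mem (hx r))
      (fun {x y} hy r => by rw [mul_assoc, mul_assoc, ← mul_assoc y]; exact J.mul_mem_left _ _ (hy r))
      (fun {x y} hx r => by rw [mul_assoc x]; exact hx _)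
    have hL : ∀ x, x ∈ L ↔ ∀ r, x * r * b ∈ J := fun x => TwoSidedIdeal.mem_mk' _ _ _ _ _ _ _
    obtain ⟨x, hxS, hxL⟩ := key L (fun x hx => (hL x).2 fun r =>
      J.mul_mem_right _ _ (J.mul_mem_right _ _ hx)) a ((hL a).2 hab) hcon.1
    rw [hL] at hxL
    let L' : TwoSidedIdeal R := TwoSidedIdeal.mk' {y | ∀ r, x * r * y ∈ J}
      (fun r => by simp [J.zero_mem])
      (fun {y z} hy hz r => by rw [mul_add]; exact J.add_mem (hy r) (hz r))
      (fun {y} hy r => by rw [mul_neg]; exact J.neg_mem (hy r))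
      (fun {z y} hy r => by rw [← mul_assoc, mul_assoc x]; exact hy _)
      (fun {y z} hy r => by rw [← mul_assoc]; exact J.mul_mem_right _ _ (hy r))
    have hL' : ∀ y, y ∈ L' ↔ ∀ r, x * r * y ∈ J := fun x => TwoSidedIdeal.mem_mk' _ _ _ _ _ _ _
    obtain ⟨y, hyS, hyL⟩ := key L' (fun y hy => (hL' y).2 fun r =>
      J.mul_mem_left _ _ hy) b ((hL' b).2 hxL) hcon.2
    rw [hL'] at hyL
    obtain ⟨r, hr⟩ := hS x hxS y hyS
    exact hJ2 _ hr (hyL r)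

end EQ

namespace EQ
open TensorProduct Polynomial

theorem inc {A R : Type*} [CommRing A] [Ring R] [Algebra A R] [Module.Finite A R]
    {P I : TwoSidedIdeal R} (hP : IsPrimeTS P) (hPI : P < I) :
    ∃ s : A, algebraMap A R s ∈ I ∧ algebraMap A R s ∉ P := by
  have hp : (contractTS (C := A) P).IsPrime := contract_prime hP
  let D := A ⧸ contractTS (C := A) P
  let W := R ⧸ P.asIdeal
  let π : R →+* W := Ideal.Quotient.mk P.asIdeal
  have hπ : ∀ x, π x = 0 ↔ x ∈ P := fun x => by
    rw [← TwoSidedIdeal.mem_asIdeal]; exact Ideal.Quotient.eq_zero_iff_mem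
  have hπs : Function.Surjective π := Ideal.Quotient.mk_surjective
  let ψ : D →+* W := Ideal.Quotient.lift _ (π.comp (algebraMap A R))
    (fun a ha => (hπ _).2 (mem_contract.1 ha))
  have hψ : ∀ a : A, ψ (Ideal.Quotient.mk _ a) = π (algebraMap A R a) := fun a => rfl
  let _ : Algebra D W := RingHom.toAlgebra' ψ (by
    intro c x
    obtain ⟨c, rfl⟩ := Ideal.Quotient.mk_surjective c
    obtain ⟨x, rfl⟩ := hπs x
    rw [hψ, ← map_mul, ← map_mul, Algebra.commutes])
  have halg : ∀ c, algebraMap D W c = ψ c := fun c => rfl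
  let f : R →ₛₗ[Ideal.Quotient.mk (contractTS (C := A) P)] W :=
    { toFun := π
      map_add' := map_add π
      map_smul' := fun a x => by
        rw [Algebra.smul_def, map_mul, Algebra.smul_def, halg, hψ] }
  have hfs : Function.Surjective f := hπs
  have : RingHomSurjective (Ideal.Quotient.mk (contractTS (C := A) P)) :=
    ⟨Ideal.Quotient.mk_surjective⟩
  have : Module.Finite D W := Module.Finite.of_surjective f hfs
  let I' : TwoSidedIdeal W := TwoSidedIdeal.mk' {w | ∃ x ∈ I, π x = w}
      ⟨0, I.zero_mem, map_zero _⟩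
      (by rintro _ _ ⟨x, hx, rfl⟩ ⟨y, hy, rfl⟩; exact ⟨x + y, I.add_mem hx hy, map_add _ _ _⟩)
      (by rintro _ ⟨x, hx, rfl⟩; exact ⟨-x, I.neg_mem hx, map_neg _ _⟩)
      (by
        rintro z _ ⟨x, hx, rfl⟩
        obtain ⟨z, rfl⟩ := hπs z
        exact ⟨z * x, I.mul_mem_left _ _ hx, map_mul _ _ _⟩)
      (by
        rintro _ z ⟨x, hx, rfl⟩
        obtain ⟨z, rfl⟩ := hπs z
        exact ⟨x * z, I.mul_mem_right _ _ hx, map_mul _ _ _⟩)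
  have hI' : ∀ w, w ∈ I' ↔ ∃ x ∈ I, π x = w := fun w => TwoSidedIdeal.mem_mk' _ _ _ _ _ _ _
  obtain ⟨x, hxI, hxP⟩ := Set.exists_of_ssubset ((TwoSidedIdeal.lt_iff _ _).1 hPI)
  obtain ⟨s, hs0, hs⟩ := inc_domain (D := D) (W := W) (by
    rw [injective_iff_map_eq_zero]
    intro c hc
    obtain ⟨c, rfl⟩ := Ideal.Quotient.mk_surjective c
    rw [halg, hψ, hπ] at hc
    exact Ideal.Quotient.eq_zero_iff_mem.2 (mem_contract.2 hc)) (by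
    intro a b h
    obtain ⟨a, rfl⟩ := hπs a
    obtain ⟨b, rfl⟩ := hπs b
    rw [hπ, hπ]
    apply hP.2
    intro r
    rw [← hπ, map_mul, map_mul]
    exact h _) I' (by
    intro h0
    have : π x ∈ I' := (hI' _).2 ⟨x, hxI, rfl⟩
    rw [h0, TwoSidedIdeal.mem_bot, hπ] at this
    exact hxP this)
  obtain ⟨s, rfl⟩ := Ideal.Quotient.mk_surjective s
  obtain ⟨y, hy, hys⟩ := (hI' _).1 hs
  rw [halg, hψ] at hys
  refine ⟨s, ?_, fun h => hs0 (Ideal.Quotient.eq_zero_iff_mem.2 (mem_contract.2 h))⟩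
  have h1 : algebraMap A R s - y ∈ P := by rw [← hπ, map_sub, hys, sub_self]
  have h2 := I.add_mem (hPI.le h1) hy
  simpa using h2

theorem mem_smul_top_mul {A R : Type*} [CommRing A] [Ring R] [Algebra A R] (p : Ideal A) {y : R}
    (hy : y ∈ p • (⊤ : Submodule A R)) (r : R) :
    y * r ∈ p • (⊤ : Submodule A R) ∧ r * y ∈ p • (⊤ : Submodule A R) := by
  refine Submodule.smul_induction_on hy ?_ ?_
  · intro a ha x _
    rw [smul_mul_assoc, mul_smul_comm]
    exact ⟨Submodule.smul_mem_smul ha trivial, Submodule.smul_mem_smul ha trivial⟩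
  · intro x z hx hz
    rw [add_mul, mul_add]
    exact ⟨add_mem hx.1 hz.1, add_mem hx.2 hz.2⟩

theorem smul_top_le {A R : Type*} [CommRing A] [Ring R] [Algebra A R] {p : Ideal A}
    {P : TwoSidedIdeal R} (h : p ≤ contractTS (C := A) P) {y : R}
    (hy : y ∈ p • (⊤ : Submodule A R)) : y ∈ P := by
  refine Submodule.smul_induction_on hy ?_ ?_
  · intro a ha x _
    rw [Algebra.smul_def]
    exact P.mul_mem_right _ _ (mem_contract.1 (h ha))
  · intro x z hx hz
    exact P.add_mem hx hz

theorem map_eq_X_pow {A B : Type*} [CommRing A] [CommRing B] (ρ : A →+* B) (q : Ideal A)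
    (hρ : ∀ a ∈ q, ρ a = 0) (g : A[X]) (hg : g.Monic)
    (hc : ∀ k, g.coeff k ∈ q ^ (g.natDegree - k)) : g.map ρ = X ^ g.natDegree := by
  ext k
  rw [coeff_map, coeff_X_pow]
  split_ifs with h
  · rw [h, hg.coeff_natDegree, map_one]
  · rcases lt_or_gt_of_ne h with h | h
    · exact hρ _ (Ideal.pow_le_self (by omega) (hc k))
    · rw [coeff_eq_zero_of_natDegree_lt h, map_zero]

theorem lo {A R : Type*} [CommRing A] [Ring R] [Algebra A R] [Module.Finite A R]
    [IsNoetherianRing R] (I : TwoSidedIdeal R) (p : Ideal A) (hp : p.IsPrime)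
    (h : contractTS (C := A) I ≤ p) :
    ∃ P, IsPrimeTS P ∧ I ≤ P ∧ contractTS (C := A) P = p := by
  let J : TwoSidedIdeal R := TwoSidedIdeal.mk'
      {x | ∃ i ∈ I, ∃ y ∈ p • (⊤ : Submodule A R), i + y = x}
      ⟨0, I.zero_mem, 0, zero_mem _, by simp⟩
      (by
        rintro _ _ ⟨i, hi, y, hy, rfl⟩ ⟨i', hi', y', hy', rfl⟩
        exact ⟨i + i', I.add_mem hi hi', y + y', add_mem hy hy', by abel⟩)
      (by
        rintro _ ⟨i, hi, y, hy, rfl⟩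
        exact ⟨-i, I.neg_mem hi, -y, neg_mem hy, by abel⟩)
      (by
        rintro z _ ⟨i, hi, y, hy, rfl⟩
        exact ⟨z * i, I.mul_mem_left _ _ hi, z * y, (mem_smul_top_mul p hy z).2, by rw [mul_add]⟩)
      (by
        rintro _ z ⟨i, hi, y, hy, rfl⟩
        exact ⟨i * z, I.mul_mem_right _ _ hi, y * z, (mem_smul_top_mul p hy z).1, by rw [add_mul]⟩)
  have hJ : ∀ w, w ∈ J ↔ ∃ i ∈ I, ∃ y ∈ p • (⊤ : Submodule A R), i + y = w :=
    fun w => TwoSidedIdeal.mem_mk' _ _ _ _ _ _ _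
  obtain ⟨P, hP, hJP, hPS⟩ := exists_prime {x | ∃ s : A, s ∉ p ∧ algebraMap A R s = x}
    ⟨1, 1, fun h1 => hp.ne_top ((Ideal.eq_top_iff_one _).2 h1), map_one _⟩
    (by
      rintro _ ⟨s, hs, rfl⟩ _ ⟨s', hs', rfl⟩
      exact ⟨1, s * s', fun h => (hp.mem_or_mem h).elim hs hs', by simp⟩) J (by
      rintro _ ⟨s, hs, rfl⟩ hsJ
      apply hs
      obtain ⟨i, hi, y, hy, hiy⟩ := (hJ _).1 hsJ
      let N : Submodule A R :=
        { carrier := I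
          zero_mem' := I.zero_mem
          add_mem' := fun hx hy => I.add_mem hx hy
          smul_mem' := fun a x hx => by
            rw [Algebra.smul_def]; exact I.mul_mem_left _ _ hx }
      have hN : ∀ x, x ∈ N ↔ x ∈ I := fun x => Iff.rfl
      obtain ⟨g, hg, -, hc, h0⟩ :=
        LinearMap.exists_monic_and_natDegree_eq_and_coeff_mem_pow_and_aeval_eq_zero
        (R := A) (M := R ⧸ N) (algebraMap A (Module.End A (R ⧸ N)) s) p (by
          rintro _ ⟨w, rfl⟩
          obtain ⟨x, rfl⟩ := Submodule.Quotient.mk_surjective N w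
          rw [Module.algebraMap_end_apply, ← Submodule.Quotient.mk_smul, Algebra.smul_def, ← hiy,
            add_mul, Submodule.Quotient.mk_add,
            (Submodule.Quotient.mk_eq_zero N).2 ((hN _).2 (I.mul_mem_right _ _ hi)), zero_add]
          have h1 : Submodule.map N.mkQ (p • ⊤) ≤ p • ⊤ := by
            rw [Submodule.map_smul'']
            exact Submodule.smul_mono le_rfl le_top
          exact h1 ⟨y * x, (mem_smul_top_mul p hy x).1, rfl⟩)
      rw [aeval_algebraMap_apply] at h0
      have h2 := congrArg (fun l => l (Submodule.Quotient.mk (1 : R))) h0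
      simp only [Module.algebraMap_end_apply, LinearMap.zero_apply] at h2
      rw [← Submodule.Quotient.mk_smul, Submodule.Quotient.mk_eq_zero, hN,
        ← Algebra.algebraMap_eq_smul_one, ← mem_contract] at h2
      have h3 := h h2
      rw [← Ideal.Quotient.eq_zero_iff_mem] at h3 ⊢
      rw [coe_aeval_eq_eval, ← eval_map_apply, map_eq_X_pow _ p (fun a ha => Ideal.Quotient.eq_zero_iff_mem.2 ha) g hg hc] at h3
      rw [eval_pow, eval_X] at h3
      exact eq_zero_of_pow_eq_zero h3)
  refine ⟨P, hP, fun x hx => hJP ((hJ x).2 ⟨x, hx, 0, zero_mem _, add_zero _⟩), ?_⟩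
  apply le_antisymm
  · intro a ha
    by_contra hap
    exact hPS _ ⟨a, hap, rfl⟩ (mem_contract.1 ha)
  · intro a ha
    rw [mem_contract]
    apply hJP
    rw [hJ]
    refine ⟨0, I.zero_mem, _, ?_, zero_add _⟩
    rw [Algebra.algebraMap_eq_smul_one]
    exact Submodule.smul_mem_smul ha trivial

end EQ

namespace EQ
open TensorProduct Polynomial

theorem dvd_X_pow_monic {L : Type*} [Field L] (f : L[X]) (hf : f.Monic) (c : L) (hc : c ≠ 0) (n : ℕ)
    (h : f ∣ C c * X ^ n) : ∃ i, f = X ^ i := by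
  have h1 : f ∣ X ^ n := by
    have hu : IsUnit (C c : L[X]) := isUnit_C.2 (isUnit_iff_ne_zero.2 hc)
    exact (IsUnit.dvd_mul_left hu).1 h
  obtain ⟨i, -, hi⟩ := (dvd_prime_pow prime_X n).1 h1
  exact ⟨i, eq_of_monic_of_associated hf (monic_X_pow i) hi⟩

theorem aeval_mem {A R : Type*} [CommRing A] [Ring R] [Algebra A R] (q : Ideal A) (f : A[X])
    (hf : ∀ k, f.coeff k ∈ q) (t : R) : aeval t f ∈ q • (⊤ : Submodule A R) := by
  rw [aeval_eq_sum_range]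
  exact Submodule.sum_mem _ fun i _ => Submodule.smul_mem_smul (hf i) trivial

theorem nil {A R : Type*} [CommRing A] [IsDomain A] [IsIntegrallyClosed A] [Ring R] [Algebra A R]
    [Module.Finite A R] (htf : ∀ (a : A) (x : R), a ≠ 0 → a • x = 0 → x = 0)
    (q : Ideal A) (hq : q.IsPrime) (a : A) (ha : a ∉ q) (t : R)
    (ht : a • t ∈ q • (⊤ : Submodule A R)) : ∃ m, t ^ m ∈ q • (⊤ : Submodule A R) := by
  obtain ⟨g, hg, -, hc, h0⟩ :=
    LinearMap.exists_monic_and_natDegree_eq_and_coeff_mem_pow_and_aeval_eq_zero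
    (R := A) (M := R) (Algebra.lmul A R (a • t)) q (by
      rintro _ ⟨w, rfl⟩
      exact (mem_smul_top_mul q ht w).1)
  rw [aeval_algHom_apply] at h0
  have h1 : aeval (a • t) g = 0 := by
    have := congrArg (fun l => l (1 : R)) h0
    simpa using this
  let h : A[X] := g.comp (C a * X)
  have hh : aeval t h = 0 := by
    rw [aeval_comp, map_mul, aeval_C, aeval_X, ← Algebra.smul_def, h1]
  obtain ⟨u, hu, hut⟩ : IsIntegral A t := Algebra.IsIntegral.isIntegral t
  let K := FractionRing A
  let T := K ⊗[A] R
  let j : R →ₐ[A] T := Algebra.TensorProduct.includeRight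
  have hloc : IsLocalizedModule (nonZeroDivisors A) (TensorProduct.mk A K R 1) := inferInstance
  have hjmk : ∀ w, TensorProduct.mk A K R 1 w = j w := fun w => rfl
  have hjinj : ∀ w, j w = 0 → w = 0 := by
    intro w h
    have h' : TensorProduct.mk A K R 1 w = TensorProduct.mk A K R 1 0 := by
      rw [hjmk, h, map_zero]
    obtain ⟨c, hc⟩ := (IsLocalizedModule.eq_iff_exists (nonZeroDivisors A) _).1 h'
    rw [smul_zero] at hc
    exact htf c w (nonZeroDivisors.ne_zero c.2) hc
  have haev : ∀ f : A[X], aeval (j t) (f.map (algebraMap A K)) = j (aeval t f) := by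
    intro f
    rw [aeval_map_algebraMap, aeval_algHom_apply]
  have hd : ∀ f : A[X], aeval t f = 0 → minpoly K (j t) ∣ f.map (algebraMap A K) := by
    intro f hf
    apply minpoly.dvd
    rw [haev, hf, map_zero]
  have hut' : aeval t u = 0 := hut
  have hint : IsIntegral K (j t) := ⟨u.map (algebraMap A K), hu.map _, by
    have := haev u
    rw [hut', map_zero] at this
    exact this⟩
  obtain ⟨φ, hφ⟩ := IsIntegrallyClosed.eq_map_mul_C_of_dvd K hu (hd u hut')
  rw [(minpoly.monic hint).leadingCoeff, C_1, mul_one] at hφ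
  have hinj : Function.Injective (algebraMap A K) := IsFractionRing.injective A K
  have hφm : φ.Monic := by
    apply monic_of_injective hinj
    rw [hφ]; exact minpoly.monic hint
  have hφt : aeval t φ = 0 := by
    apply hjinj
    rw [← haev, hφ, minpoly.aeval]
  have hφh : φ ∣ h := by
    rw [← map_dvd_map _ hinj hφm, hφ]
    exact hd h hh
  let L := FractionRing (A ⧸ q)
  let ρ : A →+* L := (algebraMap (A ⧸ q) L).comp (Ideal.Quotient.mk q)
  have hρ : ∀ x, ρ x = 0 ↔ x ∈ q := by
    intro x
    rw [← Ideal.Quotient.eq_zero_iff_mem]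
    exact map_eq_zero_iff _ (IsFractionRing.injective (A ⧸ q) L)
  have hhρ : h.map ρ = C (ρ a ^ g.natDegree) * X ^ g.natDegree := by
    rw [Polynomial.map_comp, map_eq_X_pow ρ q (fun a ha => (hρ a).2 ha) g hg hc]
    simp [mul_pow]
  obtain ⟨i, hi⟩ := dvd_X_pow_monic (φ.map ρ) (hφm.map ρ) _
    (pow_ne_zero g.natDegree (fun h => ha ((hρ a).1 h))) g.natDegree
    (by rw [← hhρ]; exact Polynomial.map_dvd ρ hφh)
  refine ⟨i, ?_⟩
  have h5 : aeval t (X ^ i - φ) ∈ q • (⊤ : Submodule A R) := by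
    apply aeval_mem
    intro k
    rw [← hρ, ← coeff_map, Polynomial.map_sub, hi]
    simp
  rw [map_sub, hφt, sub_zero, map_pow, aeval_X] at h5
  exact h5

theorem gd {A R : Type*} [CommRing A] [IsDomain A] [IsIntegrallyClosed A] [Ring R] [Algebra A R]
    [Module.Finite A R] [IsNoetherianRing R] (htf : ∀ (a : A) (x : R), a ≠ 0 → a • x = 0 → x = 0)
    (q : Ideal A) (hq : q.IsPrime) (P : TwoSidedIdeal R) (hP : IsPrimeTS P)
    (hqP : q ≤ contractTS (C := A) P) :
    ∃ Q, IsPrimeTS Q ∧ Q ≤ P ∧ contractTS (C := A) Q = q := by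
  have h1q : (1 : A) ∉ q := fun h1 => hq.ne_top ((Ideal.eq_top_iff_one _).2 h1)
  have hmulq : ∀ {a b : A}, a ∉ q → b ∉ q → a * b ∉ q :=
    fun ha hb h => (hq.mem_or_mem h).elim ha hb
  let N : TwoSidedIdeal R := TwoSidedIdeal.mk'
      {x | ∃ a : A, a ∉ q ∧ a • x ∈ q • (⊤ : Submodule A R)}
      ⟨1, h1q, by simp⟩
      (by
        rintro x y ⟨a, ha, hx⟩ ⟨b, hb, hy⟩
        refine ⟨a * b, hmulq ha hb, ?_⟩
        rw [smul_add]
        refine add_mem ?_ ?_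
        · rw [mul_comm, mul_smul]; exact Submodule.smul_mem _ _ hx
        · rw [mul_smul]; exact Submodule.smul_mem _ _ hy)
      (by
        rintro x ⟨a, ha, hx⟩
        exact ⟨a, ha, by rw [smul_neg]; exact neg_mem hx⟩)
      (by
        rintro z x ⟨a, ha, hx⟩
        exact ⟨a, ha, by rw [← mul_smul_comm]; exact (mem_smul_top_mul q hx z).2⟩)
      (by
        rintro x z ⟨a, ha, hx⟩
        exact ⟨a, ha, by rw [← smul_mul_assoc]; exact (mem_smul_top_mul q hx z).1⟩)
  have hN : ∀ x, x ∈ N ↔ ∃ a : A, a ∉ q ∧ a • x ∈ q • (⊤ : Submodule A R) :=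
    fun w => TwoSidedIdeal.mem_mk' _ _ _ _ _ _ _
  have hNP : N ≤ P := by
    by_contra hcon
    have hlt : P < P ⊔ N := lt_of_le_of_ne le_sup_left fun h => hcon (h ▸ le_sup_right)
    obtain ⟨s, hs, hsP⟩ := inc (A := A) hP hlt
    obtain ⟨x, hx, t, ht, hxt⟩ := TwoSidedIdeal.mem_sup.1 hs
    obtain ⟨a, ha, hat⟩ := (hN t).1 ht
    obtain ⟨m, hm⟩ := nil htf q hq a ha t hat
    have hmP := smul_top_le hqP hm
    apply hsP
    rw [← mem_contract]
    apply (contract_prime (C := A) hP).mem_of_pow_mem m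
    rw [mem_contract, map_pow, ← hxt, ← TwoSidedIdeal.mem_asIdeal]
    rw [← TwoSidedIdeal.mem_asIdeal] at hx hmP
    rw [← Ideal.Quotient.eq_zero_iff_mem] at hx hmP ⊢
    rw [map_pow, map_add, hx, zero_add, ← map_pow, hmP]
  obtain ⟨Q, hQ, hNQ, hS⟩ := exists_prime
    {x : R | ∃ a : A, a ∉ q ∧ ∃ t, t ∉ P ∧ a • t = x}
    ⟨1, 1, h1q, 1, one_notMem hP.1, one_smul _ _⟩
    (by
      rintro _ ⟨a, ha, t, ht, rfl⟩ _ ⟨b, hb, t', ht', rfl⟩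
      by_contra hcon
      push Not at hcon
      refine (hP.2 t t' fun r => ?_).elim ht ht'
      by_contra hr
      refine hcon r ⟨a * b, hmulq ha hb, _, hr, ?_⟩
      rw [smul_mul_assoc, smul_mul_assoc, mul_smul_comm, smul_smul]) N (by
      rintro _ ⟨a, ha, t, ht, rfl⟩ hx
      obtain ⟨b, hb, hbt⟩ := (hN _).1 hx
      exact ht (hNP ((hN t).2 ⟨b * a, hmulq hb ha, by rw [mul_smul]; exact hbt⟩)))
  refine ⟨Q, hQ, ?_, ?_⟩
  · intro x hx
    by_contra hxP
    exact hS x ⟨1, h1q, x, hxP, one_smul _ _⟩ hx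
  · apply le_antisymm
    · intro a ha
      by_contra haq
      rw [mem_contract, Algebra.algebraMap_eq_smul_one] at ha
      exact hS _ ⟨a, haq, 1, one_notMem hP.1, rfl⟩ ha
    · intro a ha
      rw [mem_contract]
      apply hNQ
      rw [hN]
      refine ⟨1, h1q, ?_⟩
      rw [one_smul, Algebra.algebraMap_eq_smul_one]
      exact Submodule.smul_mem_smul ha trivial

end EQ

namespace EQ

theorem dev_step {A R : Type*} [CommRing A] [Ring R] [Algebra A R] {P : TwoSidedIdeal R}
    (hP : IsPrimeTS P) (c : A) (hc : algebraMap A R c ∉ P) (Q : Ideal R) (hPQ : P.asIdeal ≤ Q)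
    (hcQ : algebraMap A R c ∈ Q) (hQ : Q ≠ ⊤) (m : ℕ) (h : DevLE m P.asIdeal ⊤) :
    ∃ m', m = m' + 1 ∧ DevLE m' Q ⊤ := by
  let e : ℕ → R := fun i => algebraMap A R (c ^ i)
  let φ : ℕ → Ideal R → Ideal R := fun i J =>
    P.asIdeal ⊔ Submodule.map (LinearMap.toSpanSingleton R R (e i)) J
  have hφ : ∀ i, Monotone (φ i) := fun i J K hJK => sup_le_sup le_rfl (Submodule.map_mono hJK)
  have hinj : ∀ i u v, Q ≤ u → u ≤ v → v ≤ ⊤ → φ i u = φ i v → u = v := by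
    intro i u v hu huv _ huv'
    refine le_antisymm huv fun y hy => ?_
    have h1 : y * e i ∈ φ i v := Submodule.mem_sup_right ⟨y, hy, rfl⟩
    rw [← huv'] at h1
    obtain ⟨p, hp, _, ⟨x, hx, rfl⟩, hpx⟩ := Submodule.mem_sup.1 h1
    have h2 : y - x ∈ P := by
      refine mem_of_smul (C := A) hP (c := c ^ i) ?_ ?_
      · rw [← mem_contract] at hc ⊢
        exact fun h => hc ((contract_prime (C := A) hP).mem_of_pow_mem i h)
      · rw [Algebra.commutes, sub_mul]
        have : y * e i - x * e i = p := by
          rw [← hpx]; simp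
        change y * e i - x * e i ∈ P
        rw [this]
        exact TwoSidedIdeal.mem_asIdeal.1 hp
    have h3 : y - x ∈ u := hu (hPQ (TwoSidedIdeal.mem_asIdeal.2 h2))
    have := u.add_mem h3 hx
    simpa using this
  have hle : ∀ i, φ (i + 1) ⊤ ≤ φ i Q := by
    intro i
    refine sup_le le_sup_left ?_
    rintro _ ⟨x, -, rfl⟩
    refine Submodule.mem_sup_right ⟨x * algebraMap A R c, Q.mul_mem_left _ hcQ, ?_⟩
    simp [e, pow_succ', mul_assoc]
  have hanti : Antitone fun i => φ i ⊤ :=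
    antitone_nat_of_succ_le fun i => (hle i).trans (hφ i le_top)
  cases m with
  | zero =>
    obtain ⟨i, hi⟩ := (h _ hanti (fun i => le_sup_left) le_top).exists
    refine absurd (hinj i Q ⊤ le_rfl le_top le_rfl (le_antisymm (hφ i le_top) ?_)) hQ
    exact hi.symm.le.trans (hle i)
  | succ m =>
    obtain ⟨i, hi⟩ := (h _ hanti (fun i => le_sup_left) le_top).exists
    exact ⟨m, rfl, devLE_comap (φ i) (hφ i) m _ _ _ _ (hle i) le_rfl (hinj i) hi⟩

theorem dev_lower {A R : Type*} [CommRing A] [Ring R] [Algebra A R] [Module.Finite A R]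
    [IsNoetherianRing R] (n : ℕ) : ∀ (m : ℕ) (P : TwoSidedIdeal R) (hP : IsPrimeTS P),
    (∃ s : LTSeries (PrimeSpectrum A), s.length = n ∧ s.head.asIdeal = contractTS (C := A) P) →
    DevLE m P.asIdeal ⊤ → n ≤ m := by
  induction n with
  | zero => exact fun _ _ _ _ _ => Nat.zero_le _
  | succ n ih =>
    rintro m P hP ⟨s, hs, hsP⟩ h
    have hlen : 0 < s.length := by omega
    let q := s.tail (by omega) |>.head
    have hlt : s.head < q := by
      have : q = s ⟨1, by omega⟩ := by
        simp [q, RelSeries.head_tail]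
        congr 1
        ext
        simp
        omega
      rw [this]
      apply s.strictMono
      rw [Fin.lt_def]; simp
    have hlt' : s.head.asIdeal < q.asIdeal := hlt
    obtain ⟨hle, hnle⟩ := (lt_iff_le_not_ge.1 hlt')
    obtain ⟨c, hcq, hcp⟩ := SetLike.not_le_iff_exists.1 hnle
    rw [hsP] at hle hcp
    obtain ⟨Q, hQ, hPQ, hQq⟩ := lo P q.asIdeal q.isPrime hle
    rw [← hQq] at hcq
    rw [mem_contract] at hcq hcp
    obtain ⟨m', rfl, hm'⟩ := dev_step hP c hcp Q.asIdeal (TwoSidedIdeal.asIdeal.monotone hPQ)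
      (TwoSidedIdeal.mem_asIdeal.2 hcq) (fun h => one_notMem hQ.1 (TwoSidedIdeal.mem_asIdeal.1 (by rw [h]; trivial))) m h
    have := ih m' Q hQ ⟨s.tail (by omega), by simp [hs], hQq.symm⟩ hm'
    omega

end EQ

namespace EQ

theorem torsion_free {A R : Type*} [CommRing A] [IsDomain A] [IsNoetherianRing A] [Ring R]
    [Algebra A R] [Module.Finite A R] [IsNoetherianRing R]
    (hinj : Function.Injective (algebraMap A R)) (d : ℕ) (hd : ringKrullDim A = d)
    (hK : ∀ I : Ideal R, I ≠ ⊥ → moduleKdim R I = moduleKdim R R) :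
    ∀ (a : A) (x : R), a ≠ 0 → a • x = 0 → x = 0 := by
  intro a x ha hax
  by_contra hx
  have hco : Order.coheight (⊥ : PrimeSpectrum A) = d := by
    have := Order.coheight_bot_eq_krullDim (α := PrimeSpectrum A)
    rw [show Order.krullDim (PrimeSpectrum A) = d from hd] at this
    exact_mod_cast this
  have hprime : ∀ p : PrimeSpectrum A, a ∈ p.asIdeal → Order.coheight p + 1 ≤ d := by
    intro p hp
    rw [← hco]
    apply Order.coheight_add_one_le
    rw [bot_lt_iff_ne_bot]
    rintro rfl
    exact ha (by simpa using hp)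
  have hnu : ¬ IsUnit a := by
    intro h
    exact hx ((h.smul_eq_zero).1 hax)
  obtain ⟨p, hp, hap⟩ := exists_max_ideal_of_mem_nonunits hnu
  have hd1 := hprime ⟨p, hp.isPrime⟩ hap
  obtain ⟨d, rfl⟩ : ∃ d', d = d' + 1 := by
    cases d with
    | zero => simp at hd1
    | succ d => exact ⟨d, rfl⟩
  have hlow : ((d + 1 : ℕ) : ℕ∞) ≤ moduleKdim R R := by
    apply le_sInf
    rintro _ ⟨m, rfl, hm⟩
    obtain ⟨s, hs1, hs2⟩ := Order.exists_series_of_coheight_eq_coe _ hco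
    have hbot : contractTS (C := A) (⊥ : TwoSidedIdeal R) = ⊥ := by
      rw [eq_bot_iff]
      intro c hc
      rw [mem_contract, TwoSidedIdeal.mem_bot] at hc
      exact hinj (by simpa using hc)
    obtain ⟨P, hP, -, hPc⟩ := lo (⊥ : TwoSidedIdeal R) (⊥ : Ideal A) Ideal.isPrime_bot hbot.le
    have := dev_lower (A := A) (d + 1) m P hP ⟨s, hs2, by rw [hs1, hPc]; rfl⟩
      (devLE_mono bot_le le_rfl hm)
    exact_mod_cast this
  let I : Ideal R := Ideal.span {x}
  have hI : I ≠ ⊥ := by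
    intro h
    exact hx (Ideal.span_singleton_eq_bot.1 h)
  have hnoeth : IsNoetherian A R := inferInstance
  have hnI : IsNoetherian A I :=
    isNoetherian_of_injective (I.subtype.restrictScalars A) Subtype.val_injective
  have hup : moduleKdim R I ≤ d := by
    apply sInf_le
    refine ⟨d, rfl, ?_⟩
    refine devLE_comap (fun N : Submodule R I => N.restrictScalars A) (fun _ _ h => h) d ⊥ ⊤ ⊥ ⊤
      bot_le le_top (fun u v _ _ _ h => Submodule.restrictScalars_injective A R I h) ?_
    refine devLE_module d (Ideal.span {a}) ?_ _ ?_
    · intro p hp hap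
      refine devLE_prime d ⟨p, hp⟩ ?_
      have := hprime ⟨p, hp⟩ (hap (Ideal.mem_span_singleton_self a))
      push_cast at this
      exact (ENat.add_le_add_iff_right (by simp)).1 this
    · rintro b hb ⟨y, hy⟩
      obtain ⟨b, rfl⟩ := Ideal.mem_span_singleton'.1 hb
      obtain ⟨y, rfl⟩ := Ideal.mem_span_singleton'.1 hy
      rw [Submodule.mem_bot, Subtype.ext_iff]
      change (b * a) • (y * x) = 0
      rw [mul_smul, ← mul_smul_comm, hax, mul_zero, smul_zero]
  have h1 := hlow.trans ((hK I hI).symm.le.trans hup)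
  have h2 : d + 1 ≤ d := by exact_mod_cast h1
  omega

theorem height_upper {A R : Type*} [CommRing A] [Ring R] [Algebra A R] [Module.Finite A R]
    (d : ℕ) (hd : ringKrullDim A = d) (P : TwoSidedIdeal R) : tsHeight P ≤ d := by
  apply sSup_le
  rintro _ ⟨m, rfl, f, hf, hfp, -⟩
  let s : LTSeries (PrimeSpectrum A) := LTSeries.mk m
    (fun i => ⟨contractTS (C := A) (f i), contract_prime (hfp i)⟩) (by
      intro i j hij
      have hlt := hf hij
      obtain ⟨c, hc, hc'⟩ := inc (A := A) (hfp i) hlt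
      rw [← mem_contract] at hc hc'
      change contractTS (C := A) (f i) < contractTS (C := A) (f j)
      refine lt_of_le_of_ne (fun x hx => mem_contract.2 (hlt.le (mem_contract.1 hx))) fun h => ?_
      rw [h] at hc'
      exact hc' hc)
  have h1 : (s.length : WithBot ℕ∞) ≤ ringKrullDim A := Order.LTSeries.length_le_krullDim s
  rw [hd] at h1
  have h2 : m ≤ d := by
    have : s.length = m := rfl
    rw [this] at h1
    exact_mod_cast h1
  exact_mod_cast h2

theorem max_prime {R : Type*} [Ring R] [IsNoetherianRing R] {M : TwoSidedIdeal R}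
    (hM : IsMaximalTS M) : IsPrimeTS M := by
  obtain ⟨P, hP, hMP, -⟩ := exists_prime {(1 : R)} ⟨1, rfl⟩ (by
    rintro x rfl y rfl; exact ⟨1, by simp⟩) M (by rintro x rfl; exact one_notMem hM.1)
  rcases hMP.eq_or_lt with h | h
  · rwa [h]
  · exact absurd (hM.2 P h) hP.1

theorem max_contract {A R : Type*} [CommRing A] [Ring R] [Algebra A R] [Module.Finite A R]
    [IsNoetherianRing R] {M : TwoSidedIdeal R} (hM : IsMaximalTS M) :
    (contractTS (C := A) M).IsMaximal := by
  obtain ⟨n, hn, hle⟩ := Ideal.exists_le_maximal _ (contract_prime (C := A) (max_prime hM)).ne_top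
  obtain ⟨P, hP, hMP, hPn⟩ := lo M n hn.isPrime hle
  rcases hMP.eq_or_lt with h | h
  · rwa [h, hPn]
  · exact absurd (hM.2 P h) hP.1

theorem lift_chain {A R : Type*} [CommRing A] [IsDomain A] [IsIntegrallyClosed A] [Ring R]
    [Algebra A R] [Module.Finite A R] [IsNoetherianRing R]
    (htf : ∀ (a : A) (x : R), a ≠ 0 → a • x = 0 → x = 0) (n : ℕ) :
    ∀ P : {P : TwoSidedIdeal R // IsPrimeTS P},
    (∃ s : LTSeries (PrimeSpectrum A), s.length = n ∧ s.last.asIdeal = contractTS (C := A) P.1) →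
    ∃ t : LTSeries {P : TwoSidedIdeal R // IsPrimeTS P}, t.length = n ∧ t.last = P := by
  induction n with
  | zero => exact fun P _ => ⟨RelSeries.singleton _ P, rfl, rfl⟩
  | succ n ih =>
    rintro P ⟨s, hs, hsP⟩
    have hlt : s.eraseLast.last < s.last := s.eraseLast_last_rel_last (by omega)
    have hlt' : s.eraseLast.last.asIdeal < s.last.asIdeal := hlt
    obtain ⟨Q, hQ, hQP, hQc⟩ := gd htf s.eraseLast.last.asIdeal s.eraseLast.last.isPrime P.1 P.2
      (hsP ▸ hlt'.le)
    obtain ⟨t, ht, htl⟩ := ih ⟨Q, hQ⟩ ⟨s.eraseLast, by simp [hs], hQc.symm⟩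
    have hlast : t.last < P := by
      rw [htl]
      change Q < P.1
      refine lt_of_le_of_ne hQP ?_
      intro h
      rw [← hQc, hsP, h] at hlt'
      exact lt_irrefl _ hlt'
    refine ⟨t.snoc P hlast, ?_, RelSeries.last_snoc _ _ _⟩
    rw [RelSeries.snoc_length, ht]

theorem height_lower {A R : Type*} [CommRing A] [IsDomain A] [IsIntegrallyClosed A] [Ring R]
    [Algebra A R] [Module.Finite A R] [IsNoetherianRing R]
    (htf : ∀ (a : A) (x : R), a ≠ 0 → a • x = 0 → x = 0) (d : ℕ)
    (hA : ∀ m : PrimeSpectrum A, m.asIdeal.IsMaximal → (d : ℕ∞) ≤ Order.height m)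
    (M : TwoSidedIdeal R) (hM : IsMaximalTS M) : d ≤ tsHeight M := by
  have hm := max_contract (A := A) hM
  obtain ⟨s, hs1, hs2⟩ := Order.exists_series_of_le_height
    (⟨contractTS (C := A) M, hm.isPrime⟩ : PrimeSpectrum A) (hA _ hm)
  obtain ⟨t, ht, htl⟩ := lift_chain htf d ⟨M, max_prime hM⟩ ⟨s, hs2, by rw [hs1]⟩
  apply le_sSup
  subst ht
  exact ⟨t.length, rfl, fun i => (t i).1, fun i j hij => t.strictMono hij, fun i => (t i).2,
    congrArg Subtype.val htl⟩

theorem main_A {A R : Type*} [CommRing A] [IsDomain A] [IsNoetherianRing A] [IsIntegrallyClosed A]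
    [Ring R] [Algebra A R] [Module.Finite A R] [IsNoetherianRing R]
    (hinj : Function.Injective (algebraMap A R)) (d : ℕ) (hd : ringKrullDim A = d)
    (hA : ∀ m : PrimeSpectrum A, m.asIdeal.IsMaximal → (d : ℕ∞) ≤ Order.height m)
    (hK : ∀ I : Ideal R, I ≠ ⊥ → moduleKdim R I = moduleKdim R R)
    (M : TwoSidedIdeal R) (hM : IsMaximalTS M) : tsHeight M = tsKdim R := by
  have h1 := height_lower (torsion_free hinj d hd hK) d hA M hM
  have h2 : tsKdim R ≤ d := iSup_le fun P => height_upper d hd P.1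
  have h3 : tsHeight M ≤ tsKdim R :=
    le_iSup (fun P : {P : TwoSidedIdeal R // IsPrimeTS P} => tsHeight P.1) ⟨M, max_prime hM⟩
  exact le_antisymm h3 (h2.trans h1)

end EQ

namespace EQ

theorem mv_height {k : Type*} [Field k] (d : ℕ) : ∀ m : Ideal (MvPolynomial (Fin d) k),
    m.IsMaximal → (d : ℕ∞) ≤ m.height := by
  induction d with
  | zero => intro m _; simp
  | succ d ih =>
    intro m hm
    let e := (MvPolynomial.finSuccEquiv k d).toRingEquiv
    let n : Ideal (Polynomial (MvPolynomial (Fin d) k)) := m.comap e.symm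
    have hn : n.IsMaximal := Ideal.comap_isMaximal_of_surjective _ e.symm.surjective
    have h1 : n.height = m.height := e.symm.height_comap m
    have hp : (n.comap (Polynomial.C : MvPolynomial (Fin d) k →+* _)).IsMaximal :=
      Polynomial.isMaximal_comap_C_of_isJacobsonRing n
    have hlo : n.LiesOver (n.comap (Polynomial.C : MvPolynomial (Fin d) k →+* _)) := ⟨rfl⟩
    rw [← h1, Polynomial.height_eq_height_add_one
      (n.comap (Polynomial.C : MvPolynomial (Fin d) k →+* _)) n]
    push_cast
    gcongr
    exact ih _ hp


theorem main_Z {k Z R : Type*} [Field k] [CommRing Z] [Algebra k Z] [Ring R] [Algebra k R]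
    [Algebra Z R] [IsScalarTower k Z R] [Algebra.FiniteType k R] [Module.Finite Z R]
    [IsNoetherianRing R] [Nontrivial R] (hinj : Function.Injective (algebraMap Z R))
    (hK : ∀ I : Ideal R, I ≠ ⊥ → moduleKdim R I = moduleKdim R R)
    (M : TwoSidedIdeal R) (hM : IsMaximalTS M) : tsHeight M = tsKdim R := by
  obtain ⟨B, hB, hBR⟩ := exists_subalgebra_of_fg k Z R
    Algebra.FiniteType.out Module.Finite.fg_top
  have hBf : Algebra.FiniteType k B := B.fg_iff_finiteType.1 hB
  have hBRf : Module.Finite B R := ⟨hBR⟩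
  have hZ : Nontrivial Z := (algebraMap Z R).domain_nontrivial
  obtain ⟨d, g, hg, hgf⟩ := exists_finite_inj_algHom_of_fg k B
  let A := MvPolynomial (Fin d) k
  let _ : Algebra A B := g.toRingHom.toAlgebra
  have hAB : Module.Finite A B := hgf
  let _ : Algebra A R := ((algebraMap B R).comp (algebraMap A B)).toAlgebra' (fun c x =>
    Algebra.commutes (algebraMap A B c) x)
  have htow : IsScalarTower A B R := IsScalarTower.of_algebraMap_eq' rfl
  have hAR : Module.Finite A R := Module.Finite.trans B R
  refine main_A (A := A) (R := R) ?_ d ?_ ?_ hK M hM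
  · intro x y hxy
    exact hg (Subtype.val_injective (hinj hxy))
  · simp [A]
  · intro m hm
    have := mv_height d m.asIdeal hm
    rwa [PrimeSpectrum.height_eq_orderHeight] at this

end EQ

/-- Let `R` be an affine `k`-algebra, `k` a field, which is a finite module over its
centre `Z(R)`, and suppose `R` is Krull homogeneous.  Then `R` is equicodimensional:
every maximal ideal of `R` has height equal to `Kdim R`. -/
theorem equicodimensional_of_krull_homogeneous {k R : Type*} [Field k] [Ring R]
    [Algebra k R] [Algebra.FiniteType k R] [IsNoetherianRing R]
    [Module.Finite (Subring.center R) R]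
    (hKh : (∀ I : Ideal R, I ≠ ⊥ → moduleKdim R I = moduleKdim R R) ∧
      (∀ I : Ideal Rᵐᵒᵖ, I ≠ ⊥ → moduleKdim Rᵐᵒᵖ I = moduleKdim Rᵐᵒᵖ Rᵐᵒᵖ)) :
    ∀ M : TwoSidedIdeal R, IsMaximalTS M → tsHeight M = tsKdim R := by
  intro M hM
  have hnt : Nontrivial R := by
    by_contra h
    rw [not_nontrivial_iff_subsingleton] at h
    exact EQ.one_notMem hM.1 (by rw [Subsingleton.elim (1 : R) 0]; exact M.zero_mem)
  let _ : Algebra (Subring.center R) R :=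
    { algebraMap := (Subring.center R).subtype
      commutes' := fun c x => ((Subring.mem_center_iff.1 c.2) x).symm
      smul_def' := fun c x => rfl }
  let _ : Algebra k (Subring.center R) :=
    ((algebraMap k R).codRestrict (Subring.center R) (fun c =>
      Subring.mem_center_iff.2 fun x => (Algebra.commutes c x).symm)).toAlgebra
  have : IsScalarTower k (Subring.center R) R := IsScalarTower.of_algebraMap_eq' rfl
  exact EQ.main_Z (k := k) (Z := Subring.center R) Subtype.val_injective hKh.1 M hM
end
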